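/- Fix an integer d ≥ 5 and set β = d/2 − 2. For every real a > 0, the probability μ_β^{⊗n}( |f₀(Qₙ)/E[f₀(Qₙ)] − 1| ≥ a ) tends to 0 as n → ∞, where Qₙ is the convex hull of n i.i.d. points with law μ_β and f₀(Qₙ) is its number of extreme points. In other words, f₀(Qₙ)/E[f₀(Qₙ)] converges in probability to the constant 1. -/

import Mathlib

open MeasureTheory

/-- The `β`-distribution on the closed unit disk of `ℝ²`. -/
noncomputable def betaMeasure (β : ℝ) : Measure (EuclideanSpace ℝ (Fin 2)) :=
  volume.withDensity fun x =>
    ENNReal.ofReal (if ‖x‖ ≤ 1 then (β + 1) / Real.pi * (1 - ‖x‖ ^ 2) ^ β else 0)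

instance (β : ℝ) : SigmaFinite (betaMeasure β) :=
  SigmaFinite.withDensity_ofReal _

/-- The joint law of `n` i.i.d. points with law `μ_β`, realized on `(ℝ²)ⁿ`. -/
noncomputable def betaPi (β : ℝ) (n : ℕ) :
    Measure (Fin n → EuclideanSpace ℝ (Fin 2)) :=
  Measure.pi fun _ => betaMeasure β

/-- The number of vertices (extreme points) of the convex hull `Qₙ`, as a real. -/
noncomputable def vertCount {n : ℕ} (ω : Fin n → EuclideanSpace ℝ (Fin 2)) : ℝ :=
  Nat.card (Set.extremePoints ℝ (convexHull ℝ (Set.range ω)))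

/-- `E[f₀(Qₙ)]`. -/
noncomputable def meanF0 (β : ℝ) (n : ℕ) : ℝ :=
  ∫ ω, vertCount ω ∂ betaPi β n

/-! By the Chebyshev inequality it suffices that `E[N ^ 2] ≤ (1 + o(1)) * E[N] ^ 2` for the number
`N` of edges of the polygon, which is almost surely its number of vertices. Two sample points span
an edge exactly when all other sample points lie to the left of the line through them, so both
moments are governed by powers of masses of half-planes and of intersections of two half-planes.

If the right side of a line has at least the mass of a cap of height `s`, with `s` chosen so that
such a cap contains a small power of `n` many points on average, the line almost never carries an
edge. For every other line the right side lies in a cap of height `s`. If the caps of two such lines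
are disjoint, the two events are nearly independent; if the caps meet, both endpoints of the second
edge lie in a cap of height `10 * s` determined by the first, which makes this case negligible:
caps of height `s` have mass of order `s ^ α`, and there are at least of order `1 / √s` edges,
since among about `1 / √s` disjoint caps nearly all contain a sample point, hence a vertex.
-/

namespace RandomPolygon

open Filter Topology Finset
open scoped RealInnerProductSpace

attribute [local instance] FiniteDimensional.of_fact_finrank_eq_two

section SecondMoment

theorem tendsto_measure_le_abs_div_integral_sub_one {ι : Type*} {l : Filter ι} {Ω : ι → Type*}
    [∀ i, MeasurableSpace (Ω i)] {P : ∀ i, Measure (Ω i)} [∀ i, IsProbabilityMeasure (P i)]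
    {X : ∀ i, Ω i → ℝ} (hX : ∀ᶠ i in l, MemLp (X i) 2 (P i))
    (hpos : ∀ᶠ i in l, 0 < ∫ ω, X i ω ∂P i) {b : ι → ℝ} (hb : Tendsto b l (𝓝 1))
    (hle : ∀ᶠ i in l, ∫ ω, X i ω ^ 2 ∂P i ≤ b i * (∫ ω, X i ω ∂P i) ^ 2) {a : ℝ} (ha : 0 < a) :
    Tendsto (fun i ↦ P i {ω | a ≤ |X i ω / ∫ ω', X i ω' ∂P i - 1|}) l (𝓝 0) := by
  have hlim : Tendsto (fun i ↦ ENNReal.ofReal ((b i - 1) / a ^ 2)) l (𝓝 0) := by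
    have h := ENNReal.tendsto_ofReal ((hb.sub_const 1).div_const (a ^ 2))
    rwa [sub_self, zero_div, ENNReal.ofReal_zero] at h
  refine tendsto_of_tendsto_of_tendsto_of_le_of_le' tendsto_const_nhds hlim
    (.of_forall fun i ↦ zero_le) ?_
  filter_upwards [hX, hpos, hle] with i hXi hi hlei
  set e := ∫ ω, X i ω ∂P i
  have hset : {ω | a ≤ |X i ω / e - 1|} = {ω | a * e ≤ |X i ω - e|} := by
    ext ω
    rw [Set.mem_ofPred_eq, Set.mem_ofPred_eq, div_sub_one hi.ne', abs_div, abs_of_pos hi,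
      le_div_iff₀ hi]
  have hvar : ProbabilityTheory.variance (X i) (P i) ≤ (b i - 1) * e ^ 2 := by
    rw [ProbabilityTheory.variance_eq_sub hXi]
    simp only [Pi.pow_apply]
    linarith
  rw [hset]
  refine (ProbabilityTheory.meas_ge_le_variance_div_sq hXi (mul_pos ha hi)).trans
    (ENNReal.ofReal_le_ofReal ?_)
  rw [div_le_div_iff₀ (by positivity) (by positivity)]
  calc ProbabilityTheory.variance (X i) (P i) * a ^ 2 ≤ (b i - 1) * e ^ 2 * a ^ 2 := by gcongr
    _ = (b i - 1) * (a * e) ^ 2 := by ring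

end SecondMoment

section Counting

variable {Ω ι : Type*} {A : ι → Set Ω} [∀ ω i, Decidable (ω ∈ A i)]

theorem card_filter_mem_eq_sum_indicator (s : Finset ι) (ω : Ω) :
    (#{i ∈ s | ω ∈ A i} : ℝ) = ∑ i ∈ s, (A i).indicator (fun _ ↦ 1) ω := by
  classical
  simp [Set.indicator_apply]

variable [MeasurableSpace Ω] {P : Measure Ω} [IsFiniteMeasure P]

theorem integrable_card_filter_mem (s : Finset ι) (hA : ∀ i ∈ s, MeasurableSet (A i)) :
    Integrable (fun ω ↦ (#{i ∈ s | ω ∈ A i} : ℝ)) P := by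
  simp_rw [card_filter_mem_eq_sum_indicator]
  exact integrable_finsetSum _ fun i hi ↦ (integrable_const (1 : ℝ)).indicator (hA i hi)

theorem integral_card_filter_mem (s : Finset ι) (hA : ∀ i ∈ s, MeasurableSet (A i)) :
    ∫ ω, (#{i ∈ s | ω ∈ A i} : ℝ) ∂P = ∑ i ∈ s, P.real (A i) := by
  simp_rw [card_filter_mem_eq_sum_indicator]
  rw [integral_finsetSum _ fun i hi ↦ (integrable_const (1 : ℝ)).indicator (hA i hi)]
  exact Finset.sum_congr rfl fun i hi ↦ by
    simpa using! integral_indicator_one (μ := P) (hA i hi)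

theorem memLp_two_card_filter_mem (s : Finset ι) (hA : ∀ i ∈ s, MeasurableSet (A i)) :
    MemLp (fun ω ↦ (#{i ∈ s | ω ∈ A i} : ℝ)) 2 P :=
  .of_bound (integrable_card_filter_mem s hA).aestronglyMeasurable #s <| .of_forall fun ω ↦ by
    rw [Real.norm_natCast]
    exact_mod_cast card_filter_le _ _

end Counting

section ProductMeasure

theorem integral_indicator_comp_fst_le {X Y : Type*} [MeasurableSpace X] [MeasurableSpace Y]
    {P : Measure X} {Q : Measure Y} [SFinite P] [IsFiniteMeasure Q] {S : Set (X × Y)}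
    (hS : MeasurableSet S) {f : X → ℝ} (hf : Integrable f P) (hf0 : ∀ x, 0 ≤ f x) {c : ℝ}
    (hc : ∀ x, Q.real (Prod.mk x ⁻¹' S) ≤ c) :
    ∫ p, S.indicator (fun p ↦ f p.1) p ∂P.prod Q ≤ c * ∫ x, f x ∂P := by
  have hint := (hf.comp_fst Q).indicator hS
  rw [integral_prod _ hint, ← integral_const_mul]
  refine integral_mono hint.integral_prod_left (hf.const_mul c) fun x ↦ ?_
  calc ∫ y, S.indicator (fun p ↦ f p.1) (x, y) ∂Q
      = ∫ y, (Prod.mk x ⁻¹' S).indicator (fun _ ↦ f x) y ∂Q := rfl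
    _ = Q.real (Prod.mk x ⁻¹' S) * f x := by
        rw [integral_indicator_const _ (measurable_prodMk_left hS), smul_eq_mul]
    _ ≤ c * f x := by
        gcongr
        exacts [hf0 x, hc x]

variable {E ι κ : Type*} [MeasurableSpace E] {A : Set ((ι → E) × E)}

theorem measurableSet_forall_notMem_range [Countable κ] (g : ι ↪ κ) (hA : MeasurableSet A) :
    MeasurableSet {ω : κ → E | ∀ k ∉ Set.range g, (ω ∘ g, ω k) ∈ A} := by
  simp_rw [Set.ofPred_forall]
  exact .iInter fun k ↦ .iInter fun _ ↦ hA.preimage (by fun_prop)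

variable [Fintype κ]

theorem measureReal_pi_exists_mem (μ : Measure E) [IsProbabilityMeasure μ] {C : Set E}
    (hC : MeasurableSet C) :
    (Measure.pi fun _ ↦ μ).real {ω : κ → E | ∃ k, ω k ∈ C} =
      1 - (1 - μ.real C) ^ Fintype.card κ := by
  have hcompl : {ω : κ → E | ∃ k, ω k ∈ C}ᶜ = Set.univ.pi fun _ ↦ Cᶜ := by
    ext ω
    simp
  have hmeas : MeasurableSet {ω : κ → E | ∃ k, ω k ∈ C} :=
    .of_compl (hcompl ▸ .univ_pi fun _ ↦ hC.compl)
  rw [← compl_compl {ω : κ → E | ∃ k, ω k ∈ C}, probReal_compl_eq_one_sub hmeas.compl, hcompl,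
    measureReal_def, Measure.pi_pi, ENNReal.toReal_prod, prod_const, card_univ, ← measureReal_def,
    probReal_compl_eq_one_sub hC]

variable [Fintype ι]

theorem measurePreserving_comp_equiv (μ : Measure E) [SigmaFinite μ] (e : ι ≃ κ) :
    MeasurePreserving (fun ω : κ → E ↦ ω ∘ e) (Measure.pi fun _ ↦ μ) (Measure.pi fun _ ↦ μ) := by
  convert measurePreserving_piCongrLeft (α := fun _ ↦ E) (fun _ ↦ μ) e.symm using 1
  ext ω i
  obtain ⟨k, rfl⟩ := e.symm.surjective i
  simp [MeasurableEquiv.coe_piCongrLeft, Equiv.piCongrLeft_apply_apply]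

open Classical in
theorem measurePreserving_comp_prodMk_restrict (μ : Measure E) [SigmaFinite μ] (g : ι ↪ κ) :
    MeasurePreserving
      (fun ω : κ → E ↦ (ω ∘ g, fun k : {k // k ∉ Set.range g} ↦ ω k))
      (Measure.pi fun _ ↦ μ) ((Measure.pi fun _ ↦ μ).prod (Measure.pi fun _ ↦ μ)) := by
  let : Fintype (Set.range g) := Subtype.fintype _
  have hg := measurePreserving_comp_equiv μ (Equiv.ofInjective g g.injective)
  have hsplit := measurePreserving_piEquivPiSubtypeProd (fun _ : κ ↦ μ) (· ∈ Set.range g)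
  exact (hg.prod (.id _)).comp hsplit

theorem measureReal_forall_notMem_range (μ : Measure E) [IsProbabilityMeasure μ] (g : ι ↪ κ)
    (hA : MeasurableSet A) :
    (Measure.pi fun _ ↦ μ).real {ω : κ → E | ∀ k ∉ Set.range g, (ω ∘ g, ω k) ∈ A} =
      ∫ x, μ.real {z | (x, z) ∈ A} ^ (Fintype.card κ - Fintype.card ι)
        ∂(Measure.pi fun _ ↦ μ) := by
  classical
  let B : Set ((ι → E) × ({k // k ∉ Set.range g} → E)) := {p | ∀ k, (p.1, p.2 k) ∈ A}
  have hB : MeasurableSet B := by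
    simp_rw [B, Set.ofPred_forall]
    exact .iInter fun k ↦ hA.preimage (by fun_prop)
  have hpre : {ω : κ → E | ∀ k ∉ Set.range g, (ω ∘ g, ω k) ∈ A} =
      (fun ω ↦ (ω ∘ g, fun k : {k // k ∉ Set.range g} ↦ ω k)) ⁻¹' B := by
    ext ω
    simp [B]
  have hfibre (x : ι → E) : (Measure.pi fun _ ↦ μ).real (Prod.mk x ⁻¹' B) =
      μ.real {z | (x, z) ∈ A} ^ (Fintype.card κ - Fintype.card ι) := by
    have hbox : Prod.mk x ⁻¹' B = Set.univ.pi fun _ ↦ {z | (x, z) ∈ A} := by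
      ext y
      simp [B]
    have hcard : Fintype.card {k // k ∉ Set.range g} = Fintype.card κ - Fintype.card ι := by
      rw [Fintype.card_subtype_compl]
      exact congrArg _ (Set.card_range_of_injective g.injective)
    rw [hbox, measureReal_def, Measure.pi_pi, ENNReal.toReal_prod, Finset.prod_const, card_univ,
      hcard, measureReal_def]
  rw [hpre, measureReal_def, (measurePreserving_comp_prodMk_restrict μ g).measure_preimage
    hB.nullMeasurableSet, Measure.prod_apply hB, ← integral_toReal]
  · exact integral_congr_ae (.of_forall hfibre)
  · exact (measurable_measure_prodMk_left hB).aemeasurable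
  · exact .of_forall fun x ↦ measure_lt_top _ _

theorem ae_forall_notMem_range (μ : Measure E) [IsProbabilityMeasure μ] (g : ι ↪ κ)
    (hA : MeasurableSet A) (h : ∀ᵐ x ∂Measure.pi fun _ ↦ μ, ∀ᵐ z ∂μ, (x, z) ∈ A) :
    ∀ᵐ ω ∂Measure.pi fun _ : κ ↦ μ, ∀ k ∉ Set.range g, (ω ∘ g, ω k) ∈ A := by
  classical
  refine eventually_all.2 fun k ↦ eventually_imp_distrib_left.2 fun hk ↦ ?_
  have hpres := ((MeasurePreserving.id (Measure.pi fun _ : ι ↦ μ)).prod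
    (measurePreserving_eval (fun _ ↦ μ) (⟨k, hk⟩ : {k // k ∉ Set.range g}))).comp
      (measurePreserving_comp_prodMk_restrict μ g)
  exact hpres.quasiMeasurePreserving.ae ((Measure.ae_prod_mem_iff_ae_ae_mem hA).2 h)

end ProductMeasure

section ExtremePoints

variable {E : Type*} [NormedAddCommGroup E] [NormedSpace ℝ E]

theorem exists_mem_extremePoints_forall_le {K : Set E} (hK : IsCompact K) (hne : K.Nonempty)
    (f : StrongDual ℝ E) : ∃ x ∈ K.extremePoints ℝ, ∀ y ∈ K, f y ≤ f x := by
  have hface : IsExposed ℝ K (f.toExposed K) := ContinuousLinearMap.toExposed.isExposed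
  obtain ⟨z, hzK, hz⟩ := hK.exists_isMaxOn hne f.continuous.continuousOn
  obtain ⟨x, hx⟩ := (hface.isCompact hK).extremePoints_nonempty ⟨z, hzK, hz⟩
  exact ⟨x, hface.isExtreme.extremePoints_subset_extremePoints hx, hx.1.2⟩

theorem mem_extremePoints_convexHull_iff {P : Set E} (hP : P.Finite) {x : E} (hx : x ∈ P) :
    x ∈ (convexHull ℝ P).extremePoints ℝ ↔
      ∃ f : StrongDual ℝ E, ∀ y ∈ P, y ≠ x → f y < f x := by
  constructor
  · intro hext
    have hnot : x ∉ convexHull ℝ (P \ {x}) := fun h ↦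
      ((convex_convexHull ℝ P).mem_extremePoints_iff_mem_sdiff_convexHull_sdiff.1 hext).2
        (convexHull_mono (Set.sdiff_subset_sdiff_left (subset_convexHull ℝ P)) h)
    obtain ⟨f, c, hlt, hxc⟩ := geometric_hahn_banach_closed_point (convex_convexHull ℝ _)
      ((hP.subset Set.sdiff_subset).isClosed_convexHull ℝ) hnot
    exact ⟨f, fun y hy hyx ↦ (hlt y (subset_convexHull ℝ _ ⟨hy, hyx⟩)).trans hxc⟩
  · rintro ⟨f, hf⟩
    obtain ⟨y, hy, hmax⟩ := exists_mem_extremePoints_forall_le (hP.isCompact_convexHull (𝕜 := ℝ))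
      ⟨x, subset_convexHull ℝ P hx⟩ f
    have hyx : y = x := by
      by_contra hne
      exact (hf y (extremePoints_convexHull_subset hy) hne).not_ge
        (hmax x (subset_convexHull ℝ P hx))
    exact hyx ▸ hy

end ExtremePoints

section Caps

variable {V : Type*} [NormedAddCommGroup V] [InnerProductSpace ℝ V] {u v w y z : V} {s : ℝ}

/-- The half-space cut off by a line at distance `1 - s` from the origin in direction `u`. On the
unit ball it is a cap of height `s`. -/
def cap (u : V) (s : ℝ) : Set V := {z | 1 - s ≤ ⟪u, z⟫}

theorem isClosed_cap (u : V) (s : ℝ) : IsClosed (cap u s) :=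
  isClosed_le continuous_const (by fun_prop)

theorem norm_sub_sq_le_of_mem_cap (hu : ‖u‖ = 1) (hz : ‖z‖ ≤ 1) (h : z ∈ cap u s) :
    ‖z - u‖ ^ 2 ≤ 2 * s := by
  have hle : 1 - s ≤ ⟪u, z⟫ := h
  rw [norm_sub_sq_real, hu, real_inner_comm]
  nlinarith [norm_nonneg z]

theorem norm_sub_sq_le_of_mem_cap_inter_cap (hu : ‖u‖ = 1) (hv : ‖v‖ = 1) (hz : ‖z‖ ≤ 1)
    (hzu : z ∈ cap u s) (hzv : z ∈ cap v s) : ‖u - v‖ ^ 2 ≤ 8 * s := by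
  have hu' := norm_sub_sq_le_of_mem_cap hu hz hzu
  have hv' := norm_sub_sq_le_of_mem_cap hv hz hzv
  have htri : ‖u - v‖ ≤ ‖z - u‖ + ‖z - v‖ := by
    simpa [dist_eq_norm, norm_sub_rev] using dist_triangle u z v
  nlinarith [sq_nonneg (‖z - u‖ - ‖z - v‖), norm_nonneg (u - v)]

-- Heights scale like squared distances: three steps of length `√(2 * s)` reach height `9 * s`, and
-- `y` itself may have norm `1 - s` only.
theorem mem_cap_ten_mul (hu : ‖u‖ = 1) (hv : ‖v‖ = 1) (hw : ‖w‖ ≤ 1) (hy : ‖y‖ ≤ 1)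
    (hwu : w ∈ cap u s) (hwv : w ∈ cap v s) (hyv : y ∈ cap v s) : y ∈ cap u (10 * s) := by
  have hwu' := norm_sub_sq_le_of_mem_cap hu hw hwu
  have hwv' := norm_sub_sq_le_of_mem_cap hv hw hwv
  have hyv' := norm_sub_sq_le_of_mem_cap hv hy hyv
  have htri : ‖y - u‖ ≤ ‖w - u‖ + ‖w - v‖ + ‖y - v‖ :=
    calc ‖y - u‖ = ‖(w - u) - (w - v) + (y - v)‖ := by congr 1; abel
      _ ≤ _ := (norm_add_le _ _).trans (by gcongr; exact norm_sub_le _ _)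
  have hdist : ‖y - u‖ ^ 2 ≤ 18 * s := by
    nlinarith [norm_nonneg (y - u), sq_nonneg (‖w - u‖ - ‖w - v‖),
      sq_nonneg (‖w - u‖ - ‖y - v‖), sq_nonneg (‖w - v‖ - ‖y - v‖)]
  have hnorm : 1 - s ≤ ‖y‖ := hyv.trans ((real_inner_le_norm v y).trans (by rw [hv, one_mul]))
  have hs : 0 ≤ s := by nlinarith [sq_nonneg ‖w - u‖]
  rw [norm_sub_sq_real, hu, real_inner_comm] at hdist
  change 1 - 10 * s ≤ ⟪u, y⟫
  rcases le_or_gt s 1 with hs1 | hs1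
  · nlinarith [hs1]
  · nlinarith [hs1, sq_nonneg ‖y‖]

variable {ι κ : Type*} [Fintype ι] [Finite κ] {ω : κ → V} {u : ι → V}

theorem card_filter_exists_mem_cap_le [DecidablePred fun i ↦ ∃ k, ω k ∈ cap (u i) s]
    (hω : ∀ k, ‖ω k‖ ≤ 1) (hu : ∀ i, ‖u i‖ = 1)
    (hsep : Pairwise fun i j ↦ 8 * s < ‖u i - u j‖ ^ 2) :
    #{i | ∃ k, ω k ∈ cap (u i) s} ≤
      ((convexHull ℝ (Set.range ω)).extremePoints ℝ).ncard := by
  have hcompact : IsCompact (convexHull ℝ (Set.range ω)) :=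
    (Set.finite_range ω).isCompact_convexHull (𝕜 := ℝ)
  have hball : convexHull ℝ (Set.range ω) ⊆ Metric.closedBall 0 1 :=
    convexHull_min (by rintro _ ⟨k, rfl⟩; simpa using hω k) (convex_closedBall 0 1)
  have hmeet (i : ι) (hi : ∃ k, ω k ∈ cap (u i) s) :
      ∃ x ∈ (convexHull ℝ (Set.range ω)).extremePoints ℝ, x ∈ cap (u i) s := by
    obtain ⟨k, hk⟩ := hi
    have hkK := subset_convexHull ℝ _ (Set.mem_range_self (f := ω) k)
    obtain ⟨x, hx, hmax⟩ := exists_mem_extremePoints_forall_le hcompact ⟨_, hkK⟩ (innerSL ℝ (u i))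
    exact ⟨x, hx, le_trans hk (hmax _ hkK)⟩
  choose! x hx hxcap using hmeet
  rw [← Set.ncard_coe_finset]
  refine Set.ncard_le_ncard_of_injOn x (fun i hi ↦ hx i (by simpa using hi)) ?_
    ((Set.finite_range ω).subset extremePoints_convexHull_subset)
  intro i hi j hj hij
  simp only [coe_filter, mem_univ, true_and, Set.mem_ofPred_eq] at hi hj
  by_contra hne
  refine (hsep hne).not_ge (norm_sub_sq_le_of_mem_cap_inter_cap (hu i) (hu j)
    (by simpa using hball (hx i hi).1) (hxcap i hi) ?_)
  exact hij ▸ hxcap j hj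

end Caps

section Plane

variable {V : Type*} [NormedAddCommGroup V] [InnerProductSpace ℝ V]
  [Fact (Module.finrank ℝ V = 2)] (o : Orientation ℝ V (Fin 2))

section Directions

variable {a : V}

theorem norm_smul_add_smul_rightAngleRotation_sq (ha : ‖a‖ = 1) (x y : ℝ) :
    ‖x • a + y • o.rightAngleRotation a‖ ^ 2 = x ^ 2 + y ^ 2 := by
  rw [norm_add_sq_real, real_inner_smul_left, real_inner_smul_right,
    o.inner_rightAngleRotation_right, o.areaForm_apply_self, norm_smul, norm_smul,
    LinearIsometryEquiv.norm_map, ha]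
  simp

include o in
theorem exists_pairwise_separated_unit_vectors (M : ℕ) {t : ℝ} (ht : 0 ≤ t) (hM : M * t ≤ 1) :
    ∃ u : Fin M → V, (∀ i, ‖u i‖ = 1) ∧ Pairwise fun i j ↦ t ^ 2 ≤ ‖u i - u j‖ ^ 2 := by
  have : Nontrivial V := Module.nontrivial_of_finrank_pos (R := ℝ)
    ((Fact.out : Module.finrank ℝ V = 2) ▸ two_pos)
  obtain ⟨a, ha⟩ := exists_norm_eq V zero_le_one
  refine ⟨fun k ↦ (k * t) • a + √(1 - (k * t) ^ 2) • o.rightAngleRotation a, fun k ↦ ?_,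
    fun i j hij ↦ ?_⟩
  · have hk : (k : ℝ) * t ≤ 1 := le_trans (by gcongr; exact k.2.le) hM
    have hk' : 0 ≤ 1 - ((k : ℝ) * t) ^ 2 := sub_nonneg.2 (pow_le_one₀ (by positivity) hk)
    rw [← sq_eq_sq₀ (norm_nonneg _) zero_le_one, norm_smul_add_smul_rightAngleRotation_sq o ha,
      Real.sq_sqrt hk']
    ring
  · have hint : (1 : ℝ) ≤ ((i : ℝ) - j) ^ 2 := by
      have h : ((i : ℤ) - j) ≠ 0 := sub_ne_zero.2 (by exact_mod_cast Fin.val_ne_of_ne hij)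
      exact_mod_cast (one_le_sq_iff_one_le_abs _).2 (Int.one_le_abs h)
    have hsub : ∀ x y x' y' : ℝ, x • a + y • o.rightAngleRotation a -
        (x' • a + y' • o.rightAngleRotation a) =
        (x - x') • a + (y - y') • o.rightAngleRotation a := fun x y x' y' ↦ by module
    simp only
    rw [hsub, norm_smul_add_smul_rightAngleRotation_sq o ha, ← sub_mul, mul_pow]
    nlinarith [sq_nonneg (√(1 - ((i : ℝ) * t) ^ 2) - √(1 - ((j : ℝ) * t) ^ 2)), sq_nonneg t]

end Directions

section LeftSide

/-- The open half-plane to the left of the directed line from `x 0` to `x 1`; it is empty if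
`x 0 = x 1`. -/
def leftSide (x : Fin 2 → V) : Set V := {z | 0 < o.areaForm (x 1 - x 0) (z - x 0)}

variable {o} {x : Fin 2 → V} {z : V}

theorem mem_leftSide : z ∈ leftSide o x ↔ 0 < o.areaForm (x 1 - x 0) (z - x 0) := Iff.rfl

theorem apply_notMem_leftSide (i : Fin 2) : x i ∉ leftSide o x := by
  fin_cases i <;> simp [mem_leftSide, o.areaForm_apply_self, o.areaForm_swap (x 0)]

theorem exists_unit_normal_leftSide (hx : x 0 ≠ x 1) :
    ∃ u : V, ‖u‖ = 1 ∧ ∀ z, z ∈ leftSide o x ↔ ⟪u, z⟫ < ⟪u, x 0⟫ := by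
  set d := x 1 - x 0
  have hd : 0 < ‖d‖ := norm_pos_iff.2 (sub_ne_zero.2 hx.symm)
  refine ⟨-(‖d‖⁻¹ • o.rightAngleRotation d), ?_, fun z ↦ ?_⟩
  · rw [norm_neg, norm_smul, LinearIsometryEquiv.norm_map, norm_inv, norm_norm,
      inv_mul_cancel₀ hd.ne']
  · rw [← sub_neg, ← inner_sub_right, inner_neg_left, real_inner_smul_left,
      o.inner_rightAngleRotation_left, neg_lt_zero, mul_pos_iff_of_pos_left (inv_pos.2 hd),
      mem_leftSide]

theorem notMem_leftSide_of_apply_eq {x y : Fin 2 → V} {i j : Fin 2} (hij : i ≠ j)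
    (h : x i = y i) (hy : y j ∈ leftSide o x) : x j ∉ leftSide o y := by
  have hzero (p y z : V) : o.areaForm (z - p) (y - p) = -o.areaForm (y - p) (z - p) :=
    o.areaForm_swap _ _
  have hone (p y z : V) : o.areaForm (p - z) (y - z) = -o.areaForm (p - y) (z - y) := by
    simp only [map_sub, LinearMap.sub_apply, o.areaForm_apply_self, o.areaForm_swap p,
      o.areaForm_swap y z]
    ring
  rw [mem_leftSide] at hy ⊢
  obtain ⟨rfl, rfl⟩ | ⟨rfl, rfl⟩ : i = 0 ∧ j = 1 ∨ i = 1 ∧ j = 0 := by lia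
  · rw [← h, hzero]
    linarith
  · rw [← h, hone]
    linarith

end LeftSide

section HullEdges

variable {ι : Type*}

/-- The directed segment from `ω (g 0)` to `ω (g 1)` is an edge of the convex hull of the points
`ω`, traversed counterclockwise: all the other points are strictly to its left. -/
def IsHullEdge (ω : ι → V) (g : Fin 2 ↪ ι) : Prop :=
  ∀ k ∉ Set.range g, ω k ∈ leftSide o (ω ∘ g)

open Classical in
/-- The finite set of all counterclockwise edges of the convex hull of finitely many points. -/
noncomputable def hullEdges [Fintype ι] (ω : ι → V) : Finset (Fin 2 ↪ ι) := {g | IsHullEdge o ω g}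

variable {o} {ω : ι → V} {g g' : Fin 2 ↪ ι}

@[simp]
theorem mem_hullEdges [Fintype ι] : g ∈ hullEdges o ω ↔ IsHullEdge o ω g := by
  simp [hullEdges]

theorem IsHullEdge.eq_of_apply_eq (hg : IsHullEdge o ω g) (hg' : IsHullEdge o ω g') {i : Fin 2}
    (h : g i = g' i) : g = g' := by
  by_contra hne
  obtain ⟨j, hj⟩ := DFunLike.ne_iff.1 hne
  have hij : i ≠ j := by rintro rfl; exact hj h
  have hcases (m : Fin 2) : m = i ∨ m = j := by lia
  have hnotMem : g' j ∉ Set.range g := by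
    rintro ⟨m, hm⟩
    rcases hcases m with rfl | rfl
    · exact hij (g'.injective (h.symm.trans hm))
    · exact hj hm
  have hnotMem' : g j ∉ Set.range g' := by
    rintro ⟨m, hm⟩
    rcases hcases m with rfl | rfl
    · exact hij (g.injective (h.trans hm))
    · exact hj hm.symm
  exact notMem_leftSide_of_apply_eq (x := ω ∘ g) (y := ω ∘ g') hij (congrArg ω h) (hg _ hnotMem)
    (hg' _ hnotMem')

variable [Fintype ι]

open Classical in
theorem card_filter_not_disjoint_hullEdges_le (o : Orientation ℝ V (Fin 2)) (ω : ι → V) :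
    #{p ∈ hullEdges o ω ×ˢ hullEdges o ω | ¬ Disjoint (Set.range p.1) (Set.range p.2)} ≤
      4 * #(hullEdges o ω) := by
  let C (q : Fin 2 × Fin 2) := {p ∈ hullEdges o ω ×ˢ hullEdges o ω | p.1 q.1 = p.2 q.2}
  have hC (q : Fin 2 × Fin 2) : #(C q) ≤ #(hullEdges o ω) := by
    refine card_le_card_of_injOn Prod.fst (fun p hp ↦ ?_) ?_
    · exact (mem_product.1 (mem_filter.1 hp).1).1
    · rintro ⟨g, g'⟩ hp ⟨_, g''⟩ hp' rfl
      simp only [C, coe_filter, mem_product, mem_hullEdges, Set.mem_ofPred_eq] at hp hp'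
      rw [hp.1.2.eq_of_apply_eq hp'.1.2 (hp.2.symm.trans hp'.2)]
  calc #{p ∈ hullEdges o ω ×ˢ hullEdges o ω | ¬ Disjoint (Set.range p.1) (Set.range p.2)}
      ≤ #(univ.biUnion C) := by
        refine card_le_card fun p hp ↦ ?_
        obtain ⟨hp, hmeet⟩ := mem_filter.1 hp
        obtain ⟨_, ⟨i, rfl⟩, j, hj⟩ := Set.not_disjoint_iff.1 hmeet
        exact mem_biUnion.2 ⟨(i, j), mem_univ _, mem_filter.2 ⟨hp, hj.symm⟩⟩
    _ ≤ #(univ : Finset (Fin 2 × Fin 2)) * #(hullEdges o ω) :=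
        card_biUnion_le_card_mul _ _ _ fun q _ ↦ hC q
    _ = 4 * #(hullEdges o ω) := by simp

open Classical in
theorem card_hullEdges_sq_le (o : Orientation ℝ V (Fin 2)) (ω : ι → V) :
    #(hullEdges o ω) ^ 2 ≤ 4 * #(hullEdges o ω) +
      #{p ∈ hullEdges o ω ×ˢ hullEdges o ω | Disjoint (Set.range p.1) (Set.range p.2)} := by
  rw [sq, ← card_product, ← card_filter_add_card_filter_not
    (fun p : (Fin 2 ↪ ι) × (Fin 2 ↪ ι) ↦ Disjoint (Set.range p.1) (Set.range p.2)), add_comm]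
  gcongr
  exact card_filter_not_disjoint_hullEdges_le o ω

end HullEdges

section Vertices

variable {ι : Type*}

/-- No three of the points `ω` lie on a line. -/
def GeneralPosition (ω : ι → V) : Prop :=
  ∀ g : Fin 2 ↪ ι, ∀ k ∉ Set.range g, o.areaForm (ω (g 1) - ω (g 0)) (ω k - ω (g 0)) ≠ 0

variable {o} {ω : ι → V} {g : Fin 2 ↪ ι}

theorem notMem_range_embFinTwo {i j k : ι} {h : i ≠ j} :
    k ∉ Set.range (Function.Embedding.embFinTwo h) ↔ k ≠ i ∧ k ≠ j := by
  simp [Function.Embedding.embFinTwo_apply_zero, Function.Embedding.embFinTwo_apply_one, eq_comm]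

-- Tilting the linear functional that is constant on the edge favours its first endpoint.
theorem IsHullEdge.mem_extremePoints [Finite ι] (hg : IsHullEdge o ω g)
    (hω : Function.Injective ω) :
    ω (g 0) ∈ (convexHull ℝ (Set.range ω)).extremePoints ℝ := by
  set p := ω (g 0)
  set d := ω (g 1) - p
  have hd : 0 < ‖d‖ := norm_pos_iff.2 (sub_ne_zero.2 (hω.ne (g.injective.ne one_ne_zero)))
  obtain ⟨ε, hε, hpos⟩ : ∃ ε : ℝ, 0 < ε ∧
      ∀ k ∉ Set.range g, 0 < o.areaForm d (ω k - p) + ε * ⟪d, ω k - p⟫ := by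
    have hsmall : ∀ᶠ ε in 𝓝[>] (0 : ℝ),
        ∀ k ∉ Set.range g, 0 < o.areaForm d (ω k - p) + ε * ⟪d, ω k - p⟫ := by
      refine eventually_all.2 fun k ↦ eventually_imp_distrib_left.2 fun hk ↦ ?_
      have hcont : Continuous fun ε : ℝ ↦ o.areaForm d (ω k - p) + ε * ⟪d, ω k - p⟫ := by fun_prop
      refine nhdsWithin_le_nhds (hcont.continuousAt.eventually (lt_mem_nhds ?_))
      simpa only [zero_mul, add_zero] using! hg k hk
    exact (eventually_mem_nhdsWithin.and hsmall).exists
  rw [mem_extremePoints_convexHull_iff (Set.finite_range ω) (Set.mem_range_self _)]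
  refine ⟨-innerSL ℝ (o.rightAngleRotation d + ε • d), ?_⟩
  rintro _ ⟨k, rfl⟩ hk
  rw [← sub_pos, ← map_sub, neg_apply, ← map_neg, neg_sub, innerSL_apply_apply,
    inner_add_left, real_inner_smul_left, o.inner_rightAngleRotation_left]
  by_cases hkg : k ∈ Set.range g
  · obtain ⟨i, rfl⟩ := hkg
    have hi : i = 1 := by
      have : i ≠ 0 := by rintro rfl; exact hk rfl
      lia
    subst hi
    rw [o.areaForm_apply_self, real_inner_self_eq_norm_sq]
    positivity
  · exact hpos k hkg

variable [Fintype ι]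

theorem GeneralPosition.injective (hω : GeneralPosition o ω) (hι : 3 ≤ Fintype.card ι) :
    Function.Injective ω := by
  classical
  intro i j hij
  by_contra hne
  obtain ⟨k, hk⟩ : ∃ k, k ∉ ({i, j} : Finset ι) := by
    by_contra! h
    exact absurd (card_le_card (fun k _ ↦ h k : univ ⊆ ({i, j} : Finset ι)))
      (not_le.2 (card_le_two.trans_lt (by rwa [card_univ])))
  refine hω (.embFinTwo hne) k (notMem_range_embFinTwo.2 (by simpa using hk)) ?_
  simp [Function.Embedding.embFinTwo_apply_zero, Function.Embedding.embFinTwo_apply_one, hij]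

-- Seen from the vertex all other points lie in an open half-plane; the edge leads to the one of
-- smallest angle, which is detected by the ratio `areaForm a x / ⟪a, x⟫`.
theorem GeneralPosition.exists_isHullEdge_of_mem_extremePoints (hω : GeneralPosition o ω)
    (hι : 3 ≤ Fintype.card ι) {i : ι}
    (hi : ω i ∈ (convexHull ℝ (Set.range ω)).extremePoints ℝ) :
    ∃ g, IsHullEdge o ω g ∧ g 0 = i := by
  classical
  have hcomplete : CompleteSpace V := FiniteDimensional.complete ℝ V
  rw [mem_extremePoints_convexHull_iff (Set.finite_range ω) (Set.mem_range_self _)] at hi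
  obtain ⟨f, hf⟩ := hi
  obtain ⟨a, ha⟩ : ∃ a : V, ∀ k ≠ i, 0 < ⟪a, ω k - ω i⟫ := by
    refine ⟨-(InnerProductSpace.toDual ℝ V).symm f, fun k hk ↦ ?_⟩
    rw [inner_neg_left, InnerProductSpace.toDual_symm_apply, map_sub, neg_sub, sub_pos]
    exact hf _ (Set.mem_range_self k) ((hω.injective hι).ne hk)
  have hne : (univ.erase i).Nonempty := by
    rw [← card_pos, card_erase_of_mem (mem_univ i), card_univ]
    lia
  obtain ⟨j, hj, hmin⟩ := exists_min_image (univ.erase i)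
    (fun k ↦ o.areaForm a (ω k - ω i) / ⟪a, ω k - ω i⟫) hne
  have hji : j ≠ i := ne_of_mem_erase hj
  have ha0 : 0 < ‖a‖ ^ 2 := by
    have : a ≠ 0 := by rintro rfl; simpa using ha j hji
    positivity
  refine ⟨.embFinTwo hji.symm, fun k hk ↦ ?_, rfl⟩
  have hki : k ≠ i := (notMem_range_embFinTwo.1 hk).1
  have hle := hmin k (mem_erase.2 ⟨hki, mem_univ k⟩)
  rw [div_le_div_iff₀ (ha j hji) (ha k hki)] at hle
  have harea : 0 ≤ ‖a‖ ^ 2 * o.areaForm (ω j - ω i) (ω k - ω i) := by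
    rw [← o.inner_mul_areaForm_sub]
    linarith
  exact (nonneg_of_mul_nonneg_right harea ha0).lt_of_ne' (hω _ k hk)

theorem GeneralPosition.ncard_extremePoints_eq (hω : GeneralPosition o ω)
    (hι : 3 ≤ Fintype.card ι) :
    ((convexHull ℝ (Set.range ω)).extremePoints ℝ).ncard = #(hullEdges o ω) := by
  have hinj := hω.injective hι
  have himage : (fun g : Fin 2 ↪ ι ↦ ω (g 0)) '' hullEdges o ω =
      (convexHull ℝ (Set.range ω)).extremePoints ℝ := by
    ext x
    constructor
    · rintro ⟨g, hg, rfl⟩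
      exact (mem_hullEdges.1 hg).mem_extremePoints hinj
    · intro hx
      obtain ⟨i, rfl⟩ := extremePoints_convexHull_subset hx
      obtain ⟨g, hg, rfl⟩ := hω.exists_isHullEdge_of_mem_extremePoints hι hx
      exact ⟨g, mem_hullEdges.2 hg, rfl⟩
  have hinjOn : Set.InjOn (fun g : Fin 2 ↪ ι ↦ ω (g 0)) (hullEdges o ω) := fun g hg g' hg' h ↦
    (mem_hullEdges.1 hg).eq_of_apply_eq (mem_hullEdges.1 hg') (hinj h)
  rw [← himage, hinjOn.ncard_image, Set.ncard_coe_finset]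

end Vertices

section Measurability

theorem continuous_areaForm : Continuous fun p : V × V ↦ o.areaForm p.1 p.2 := by
  simp_rw [← o.inner_rightAngleRotation_left]
  fun_prop

theorem continuous_areaForm_sub_sub :
    Continuous fun p : (Fin 2 → V) × V ↦ o.areaForm (p.1 1 - p.1 0) (p.2 - p.1 0) :=
  (continuous_areaForm o).comp (by fun_prop :
    Continuous fun p : (Fin 2 → V) × V ↦ (p.1 1 - p.1 0, p.2 - p.1 0))

variable [MeasurableSpace V] [BorelSpace V]

theorem measurableSet_mem_leftSide :
    MeasurableSet {p : (Fin 2 → V) × V | p.2 ∈ leftSide o p.1} :=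
  (isOpen_lt continuous_const (continuous_areaForm_sub_sub o)).measurableSet

theorem measurableSet_leftSide (x : Fin 2 → V) : MeasurableSet (leftSide o x) :=
  measurable_prodMk_left (measurableSet_mem_leftSide o)

theorem measurableSet_isHullEdge {ι : Type*} [Countable ι] (g : Fin 2 ↪ ι) :
    MeasurableSet {ω : ι → V | IsHullEdge o ω g} :=
  measurableSet_forall_notMem_range g (measurableSet_mem_leftSide o)

variable (μ : Measure V) [SFinite μ]

theorem measurable_measureReal_leftSide :
    Measurable fun x : Fin 2 → V ↦ μ.real (leftSide o x) :=
  (measurable_measure_prodMk_left (measurableSet_mem_leftSide o)).ennreal_toReal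

theorem measurable_measureReal_leftSide_inter :
    Measurable fun p : (Fin 2 → V) × (Fin 2 → V) ↦
      μ.real (leftSide o p.1 ∩ leftSide o p.2) := by
  have hset : MeasurableSet {p : ((Fin 2 → V) × (Fin 2 → V)) × V |
      p.2 ∈ leftSide o p.1.1 ∩ leftSide o p.1.2} :=
    ((measurableSet_mem_leftSide o).preimage
      (by fun_prop : Measurable fun p : ((Fin 2 → V) × (Fin 2 → V)) × V ↦ (p.1.1, p.2))).inter
    ((measurableSet_mem_leftSide o).preimage
      (by fun_prop : Measurable fun p : ((Fin 2 → V) × (Fin 2 → V)) × V ↦ (p.1.2, p.2)))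
  exact (measurable_measure_prodMk_left hset).ennreal_toReal

end Measurability

section EdgeProbabilities

variable [MeasurableSpace V] [BorelSpace V] (μ : Measure V) [IsProbabilityMeasure μ]
  {ι : Type*} [Fintype ι]

/-- The probability that `m` further random points all lie to the left of the directed line through
two random points. -/
noncomputable def leftMoment (m : ℕ) : ℝ :=
  ∫ x, μ.real (leftSide o x) ^ m ∂Measure.pi fun _ : Fin 2 ↦ μ

/-- The probability that `m` further random points all lie to the left of both of the directed
lines spanned by two independent pairs of random points. -/
noncomputable def jointLeftMoment (m : ℕ) : ℝ :=
  ∫ p, μ.real (leftSide o p.1 ∩ leftSide o p.2) ^ m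
    ∂(Measure.pi fun _ : Fin 2 ↦ μ).prod (Measure.pi fun _ : Fin 2 ↦ μ)

theorem measureReal_isHullEdge (g : Fin 2 ↪ ι) :
    (Measure.pi fun _ ↦ μ).real {ω : ι → V | IsHullEdge o ω g} =
      leftMoment o μ (Fintype.card ι - 2) := by
  have h := measureReal_forall_notMem_range μ g (measurableSet_mem_leftSide o)
  rwa [Fintype.card_fin] at h

theorem measureReal_isHullEdge_inter_le {g g' : Fin 2 ↪ ι}
    (hdisj : Disjoint (Set.range g) (Set.range g')) :
    (Measure.pi fun _ ↦ μ).real {ω : ι → V | IsHullEdge o ω g ∧ IsHullEdge o ω g'} ≤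
      jointLeftMoment o μ (Fintype.card ι - 4) := by
  let G : Fin 2 ⊕ Fin 2 ↪ ι := ⟨Sum.elim g g', g.injective.sumElim g'.injective
    fun i j h ↦ Set.disjoint_left.1 hdisj ⟨i, rfl⟩ ⟨j, h.symm⟩⟩
  let A : Set ((Fin 2 ⊕ Fin 2 → V) × V) :=
    {p | p.2 ∈ leftSide o (p.1 ∘ Sum.inl) ∩ leftSide o (p.1 ∘ Sum.inr)}
  have hA : MeasurableSet A :=
    ((measurableSet_mem_leftSide o).preimage
      (by fun_prop : Measurable fun p : (Fin 2 ⊕ Fin 2 → V) × V ↦ (p.1 ∘ Sum.inl, p.2))).inter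
    ((measurableSet_mem_leftSide o).preimage
      (by fun_prop : Measurable fun p : (Fin 2 ⊕ Fin 2 → V) × V ↦ (p.1 ∘ Sum.inr, p.2)))
  calc (Measure.pi fun _ ↦ μ).real {ω : ι → V | IsHullEdge o ω g ∧ IsHullEdge o ω g'}
      ≤ (Measure.pi fun _ ↦ μ).real {ω : ι → V | ∀ k ∉ Set.range G, (ω ∘ G, ω k) ∈ A} := by
        refine measureReal_mono fun ω ⟨hg, hg'⟩ k hk ↦ ⟨hg k ?_, hg' k ?_⟩
        · exact fun ⟨i, hi⟩ ↦ hk ⟨Sum.inl i, hi⟩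
        · exact fun ⟨i, hi⟩ ↦ hk ⟨Sum.inr i, hi⟩
    _ = ∫ x, μ.real {z | (x, z) ∈ A} ^ (Fintype.card ι - 4)
          ∂Measure.pi fun _ : Fin 2 ⊕ Fin 2 ↦ μ := by
        rw [measureReal_forall_notMem_range μ G hA]
        simp
    _ = jointLeftMoment o μ (Fintype.card ι - 4) :=
        ((measurePreserving_sumPiEquivProdPi (X := fun _ : Fin 2 ⊕ Fin 2 ↦ V)
          fun _ ↦ μ).integral_comp (MeasurableEquiv.measurableEmbedding _)
          fun p ↦ μ.real (leftSide o p.1 ∩ leftSide o p.2) ^ (Fintype.card ι - 4))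

theorem integral_card_hullEdges :
    ∫ ω : ι → V, (#(hullEdges o ω) : ℝ) ∂Measure.pi (fun _ ↦ μ) =
      (Fintype.card ι).descFactorial 2 * leftMoment o μ (Fintype.card ι - 2) := by
  classical
  refine (integral_card_filter_mem univ fun g _ ↦ measurableSet_isHullEdge o g).trans ?_
  simp_rw [measureReal_isHullEdge, sum_const, card_univ, Fintype.card_embedding_eq,
    Fintype.card_fin, nsmul_eq_mul]

theorem memLp_two_card_hullEdges :
    MemLp (fun ω : ι → V ↦ (#(hullEdges o ω) : ℝ)) 2 (Measure.pi fun _ ↦ μ) := by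
  classical
  exact memLp_two_card_filter_mem univ fun g _ ↦ measurableSet_isHullEdge o g

theorem integral_card_hullEdges_sq_le :
    ∫ ω : ι → V, (#(hullEdges o ω) : ℝ) ^ 2 ∂Measure.pi (fun _ ↦ μ) ≤
      4 * ∫ ω : ι → V, (#(hullEdges o ω) : ℝ) ∂Measure.pi (fun _ ↦ μ) +
        (Fintype.card ι).descFactorial 2 ^ 2 * jointLeftMoment o μ (Fintype.card ι - 4) := by
  classical
  let D : Finset ((Fin 2 ↪ ι) × (Fin 2 ↪ ι)) := {p | Disjoint (Set.range p.1) (Set.range p.2)}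
  let A (p : (Fin 2 ↪ ι) × (Fin 2 ↪ ι)) : Set (ι → V) :=
    {ω | IsHullEdge o ω p.1 ∧ IsHullEdge o ω p.2}
  have hA (p) : MeasurableSet (A p) :=
    (measurableSet_isHullEdge o p.1).inter (measurableSet_isHullEdge o p.2)
  have hD : (#D : ℝ) ≤ (Fintype.card ι).descFactorial 2 ^ 2 := by
    refine (Nat.cast_le.2 (card_le_univ D)).trans_eq ?_
    simp [sq]
  have hpoint (ω : ι → V) :
      (#(hullEdges o ω) : ℝ) ^ 2 ≤ 4 * #(hullEdges o ω) + #{p ∈ D | ω ∈ A p} := by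
    refine mod_cast (card_hullEdges_sq_le o ω).trans_eq (congrArg _ (congrArg card ?_))
    ext p
    simp [D, A, and_comm]
  have hint := (memLp_two_card_hullEdges o μ (ι := ι)).integrable one_le_two
  have hintD := integrable_card_filter_mem (P := Measure.pi fun _ : ι ↦ μ) D fun p _ ↦ hA p
  calc ∫ ω : ι → V, (#(hullEdges o ω) : ℝ) ^ 2 ∂Measure.pi (fun _ ↦ μ)
      ≤ ∫ ω : ι → V, (4 * #(hullEdges o ω) + #{p ∈ D | ω ∈ A p} : ℝ) ∂Measure.pi (fun _ ↦ μ) :=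
        integral_mono (memLp_two_card_hullEdges o μ).integrable_sq
          ((hint.const_mul 4).add hintD) hpoint
    _ = 4 * ∫ ω : ι → V, (#(hullEdges o ω) : ℝ) ∂Measure.pi (fun _ ↦ μ) +
          ∑ p ∈ D, (Measure.pi fun _ ↦ μ).real (A p) := by
        rw [integral_add (hint.const_mul 4) hintD, integral_const_mul,
          integral_card_filter_mem D fun p _ ↦ hA p]
    _ ≤ 4 * ∫ ω : ι → V, (#(hullEdges o ω) : ℝ) ∂Measure.pi (fun _ ↦ μ) +
          #D • jointLeftMoment o μ (Fintype.card ι - 4) := by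
        gcongr
        exact sum_le_card_nsmul _ _ _ fun p hp ↦
          measureReal_isHullEdge_inter_le o μ (mem_filter.1 hp).2
    _ ≤ _ := by
        rw [nsmul_eq_mul]
        gcongr
        exact integral_nonneg fun p ↦ by positivity

end EdgeProbabilities

section Collisions

variable [MeasurableSpace V] [BorelSpace V] (μ : Measure V) [IsProbabilityMeasure μ]
  {r s K : ℝ}

variable {o μ} in
theorem exists_compl_leftSide_subset_cap (hr : 0 ≤ r)
    (hcap : ∀ u : V, ‖u‖ = 1 → 1 - r ≤ μ.real (cap u s)) {x : Fin 2 → V}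
    (hx : r < μ.real (leftSide o x)) : ∃ u, ‖u‖ = 1 ∧ (leftSide o x)ᶜ ⊆ cap u s := by
  have hne : x 0 ≠ x 1 := by
    intro h
    have hempty : leftSide o x = ∅ := by
      ext z
      simp [mem_leftSide, h]
    rw [hempty, measureReal_empty] at hx
    exact hx.not_ge hr
  obtain ⟨u, hu, hleft⟩ := exists_unit_normal_leftSide hne
  refine ⟨u, hu, ?_⟩
  suffices h : 1 - s ≤ ⟪u, x 0⟫ from fun z hz ↦ h.trans (not_lt.1 ((hleft z).not.1 hz))
  by_contra! hlt
  have hdisj : Disjoint (leftSide o x) (cap u s) := Set.disjoint_left.2 fun z hz hz' ↦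
    (((hleft z).1 hz).trans hlt).not_ge hz'
  have hsum := measureReal_union hdisj (isClosed_cap u s).measurableSet (μ := μ)
  linarith [hcap u hu, measureReal_le_one (μ := μ) (s := leftSide o x ∪ cap u s)]

/-- The pairs of directed lines that both have more than the fraction `r` of the mass `μ` on their
left, but whose left sides do not cover `μ`. They are the obstruction to the asymptotic independence
of two hull edges. -/
def collidingPairs (r : ℝ) : Set ((Fin 2 → V) × (Fin 2 → V)) :=
  {p | r < μ.real (leftSide o p.1) ∧ r < μ.real (leftSide o p.2) ∧
    μ.real (leftSide o p.1 ∪ leftSide o p.2) < 1}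

theorem measureReal_leftSide_union (x y : Fin 2 → V) :
    μ.real (leftSide o x ∪ leftSide o y) =
      μ.real (leftSide o x) + μ.real (leftSide o y) - μ.real (leftSide o x ∩ leftSide o y) :=
  eq_sub_of_add_eq (measureReal_union_add_inter (measurableSet_leftSide o y))

theorem measurableSet_collidingPairs : MeasurableSet (collidingPairs o μ r) := by
  have hleft := measurable_measureReal_leftSide o μ
  have hfst : Measurable fun p : (Fin 2 → V) × (Fin 2 → V) ↦ μ.real (leftSide o p.1) :=
    hleft.comp measurable_fst
  have hsnd : Measurable fun p : (Fin 2 → V) × (Fin 2 → V) ↦ μ.real (leftSide o p.2) :=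
    hleft.comp measurable_snd
  have hunion := (hfst.add hsnd).sub (measurable_measureReal_leftSide_inter o μ)
  simp_rw [collidingPairs, measureReal_leftSide_union]
  exact (measurableSet_lt measurable_const hfst).inter <|
    (measurableSet_lt measurable_const hsnd).inter <| measurableSet_lt hunion measurable_const

theorem measureReal_preimage_collidingPairs_le (hr : 0 ≤ r) (hball : ∀ᵐ z ∂μ, ‖z‖ ≤ 1)
    (hcap : ∀ u : V, ‖u‖ = 1 → 1 - r ≤ μ.real (cap u s))
    (hK : ∀ u : V, ‖u‖ = 1 → μ.real (cap u (10 * s)) ≤ K) (x : Fin 2 → V) :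
    (Measure.pi fun _ ↦ μ).real (Prod.mk x ⁻¹' collidingPairs o μ r) ≤ K ^ 2 := by
  by_cases hx : r < μ.real (leftSide o x)
  swap
  · have hempty : Prod.mk x ⁻¹' collidingPairs o μ r = ∅ := by
      ext y
      exact iff_of_false (fun hy ↦ hx hy.1) id
    rw [hempty, measureReal_empty]
    positivity
  obtain ⟨u, hu, hxu⟩ := exists_compl_leftSide_subset_cap hr hcap hx
  have hsub : (Prod.mk x ⁻¹' collidingPairs o μ r : Set (Fin 2 → V)) ≤ᵐ[Measure.pi fun _ ↦ μ]
      Set.univ.pi fun _ ↦ cap u (10 * s) := by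
    have hpi := eventually_all.2 fun i : Fin 2 ↦
      (Measure.tendsto_eval_ae_ae (μ := fun _ ↦ μ) (i := i)).eventually hball
    filter_upwards [hpi] with y hball_y hy i _
    obtain ⟨v, hv, hyv⟩ := exists_compl_leftSide_subset_cap hr hcap hy.2.1
    obtain ⟨w, hw, hw_notMem⟩ : ∃ w, ‖w‖ ≤ 1 ∧ w ∉ leftSide o x ∪ leftSide o y := by
      by_contra! hcover
      have hone : μ (leftSide o x ∪ leftSide o y) = 1 :=
        (prob_compl_eq_zero_iff ((measurableSet_leftSide o x).union
          (measurableSet_leftSide o y))).1 (measure_mono_null (fun w hw h ↦ hw (hcover w h)) hball)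
      exact hy.2.2.ne (by simp [measureReal_def, hone])
    rw [Set.mem_union, not_or] at hw_notMem
    exact mem_cap_ten_mul hu hv hw (hball_y i) (hxu hw_notMem.1) (hyv hw_notMem.2)
      (hyv (apply_notMem_leftSide i))
  calc (Measure.pi fun _ ↦ μ).real (Prod.mk x ⁻¹' collidingPairs o μ r)
      ≤ (Measure.pi fun _ : Fin 2 ↦ μ).real (Set.univ.pi fun _ ↦ cap u (10 * s)) :=
        ENNReal.toReal_mono (measure_ne_top _ _) (measure_mono_ae hsub)
    _ = μ.real (cap u (10 * s)) ^ 2 := by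
        simp [measureReal_def, Measure.pi_pi]
    _ ≤ K ^ 2 := by
        gcongr
        exact hK u hu

theorem pow_four_mul_pow_le (hr : 0 ≤ r) (hr1 : r ≤ 1) (m : ℕ) (p : (Fin 2 → V) × (Fin 2 → V)) :
    r ^ 4 * μ.real (leftSide o p.1 ∩ leftSide o p.2) ^ m ≤
      μ.real (leftSide o p.1) ^ (m + 2) * μ.real (leftSide o p.2) ^ (m + 2) +
        (collidingPairs o μ r).indicator (fun p ↦ μ.real (leftSide o p.1) ^ (m + 2)) p + r ^ m := by
  set a := μ.real (leftSide o p.1)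
  set b := μ.real (leftSide o p.2)
  set c := μ.real (leftSide o p.1 ∩ leftSide o p.2)
  have hca : c ≤ a := measureReal_mono Set.inter_subset_left
  have hcb : c ≤ b := measureReal_mono Set.inter_subset_right
  have ha : a ≤ 1 := measureReal_le_one
  have hb : b ≤ 1 := measureReal_le_one
  have : 0 ≤ c := measureReal_nonneg
  have hind : 0 ≤ (collidingPairs o μ r).indicator (fun p ↦ μ.real (leftSide o p.1) ^ (m + 2)) p :=
    Set.indicator_nonneg (fun _ _ ↦ by positivity) p
  have hprod : 0 ≤ a ^ (m + 2) * b ^ (m + 2) := by positivity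
  by_cases hmin : c ≤ r
  · have : r ^ 4 * c ^ m ≤ 1 * r ^ m := by
      gcongr
      exact pow_le_one₀ hr hr1
    linarith
  rw [not_le] at hmin
  have hrm : 0 ≤ r ^ m := by positivity
  by_cases hmem : p ∈ collidingPairs o μ r
  · rw [Set.indicator_of_mem hmem]
    have : r ^ 4 * c ^ m ≤ a ^ 2 * a ^ m := by
      gcongr
      calc r ^ 4 ≤ r ^ 2 := pow_le_pow_of_le_one hr hr1 (by norm_num)
        _ ≤ a ^ 2 := by gcongr; exact (hmin.trans_le hca).le
    linarith [pow_add a m 2]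
  · have hunion : 1 ≤ a + b - c := by
      rw [← measureReal_leftSide_union]
      exact not_lt.1 fun h ↦ hmem ⟨hmin.trans_le hca, hmin.trans_le hcb, h⟩
    have : r ^ 4 * c ^ m ≤ (r ^ 2 * r ^ 2) * (a * b) ^ m := by
      rw [← pow_add]
      gcongr
      nlinarith
    have : (r ^ 2 * r ^ 2) * (a * b) ^ m ≤ (a ^ 2 * b ^ 2) * (a * b) ^ m := by
      gcongr
      · exact (hmin.trans_le hca).le
      · exact (hmin.trans_le hcb).le
    calc r ^ 4 * c ^ m ≤ (a ^ 2 * b ^ 2) * (a * b) ^ m := by linarith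
      _ = a ^ (m + 2) * b ^ (m + 2) := by ring
      _ ≤ _ := by linarith

theorem integrable_measureReal_leftSide_pow (k : ℕ) :
    Integrable (fun x ↦ μ.real (leftSide o x) ^ k) (Measure.pi fun _ : Fin 2 ↦ μ) :=
  .of_bound ((measurable_measureReal_leftSide o μ).pow_const k).aestronglyMeasurable 1 <|
    .of_forall fun x ↦ by
      rw [Real.norm_of_nonneg (by positivity)]
      exact pow_le_one₀ measureReal_nonneg measureReal_le_one

theorem integrable_measureReal_leftSide_inter_pow (k : ℕ) :
    Integrable (fun p ↦ μ.real (leftSide o p.1 ∩ leftSide o p.2) ^ k)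
      ((Measure.pi fun _ : Fin 2 ↦ μ).prod (Measure.pi fun _ : Fin 2 ↦ μ)) :=
  .of_bound ((measurable_measureReal_leftSide_inter o μ).pow_const k).aestronglyMeasurable 1 <|
    .of_forall fun p ↦ by
      rw [Real.norm_of_nonneg (by positivity)]
      exact pow_le_one₀ measureReal_nonneg measureReal_le_one

theorem pow_four_mul_jointLeftMoment_le (hr : 0 ≤ r) (hr1 : r ≤ 1) (hball : ∀ᵐ z ∂μ, ‖z‖ ≤ 1)
    (hcap : ∀ u : V, ‖u‖ = 1 → 1 - r ≤ μ.real (cap u s))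
    (hK : ∀ u : V, ‖u‖ = 1 → μ.real (cap u (10 * s)) ≤ K) (m : ℕ) :
    r ^ 4 * jointLeftMoment o μ m ≤
      leftMoment o μ (m + 2) ^ 2 + K ^ 2 * leftMoment o μ (m + 2) + r ^ m := by
  set P := Measure.pi fun _ : Fin 2 ↦ μ
  let q (x : Fin 2 → V) : ℝ := μ.real (leftSide o x) ^ (m + 2)
  have hq : Integrable q P := integrable_measureReal_leftSide_pow o μ (m + 2)
  have hprod : Integrable (fun p ↦ q p.1 * q p.2) (P.prod P) := hq.mul_prod hq
  have hind := (hq.comp_fst P).indicator (measurableSet_collidingPairs o μ (r := r))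
  have hsum : Integrable (fun p ↦ q p.1 * q p.2 +
      (collidingPairs o μ r).indicator (fun p ↦ q p.1) p) (P.prod P) := hprod.add hind
  calc r ^ 4 * jointLeftMoment o μ m
      = ∫ p, r ^ 4 * μ.real (leftSide o p.1 ∩ leftSide o p.2) ^ m ∂P.prod P :=
        (integral_const_mul _ _).symm
    _ ≤ ∫ p, (q p.1 * q p.2 + (collidingPairs o μ r).indicator (fun p ↦ q p.1) p + r ^ m)
          ∂P.prod P :=
        integral_mono ((integrable_measureReal_leftSide_inter_pow o μ m).const_mul _)
          (hsum.add (integrable_const _)) (pow_four_mul_pow_le o μ hr hr1 m)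
    _ = (∫ x, q x ∂P) ^ 2 + ∫ p, (collidingPairs o μ r).indicator (fun p ↦ q p.1) p ∂P.prod P +
          r ^ m := by
        rw [integral_add hsum (integrable_const _), integral_add hprod hind, integral_prod_mul, sq,
          integral_const, probReal_univ, one_smul]
    _ ≤ leftMoment o μ (m + 2) ^ 2 + K ^ 2 * leftMoment o μ (m + 2) + r ^ m := by
        gcongr
        · rfl
        · exact integral_indicator_comp_fst_le (measurableSet_collidingPairs o μ) hq
            (fun x ↦ by positivity) (measureReal_preimage_collidingPairs_le o μ hr hball hcap hK)

end Collisions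

section EdgeBounds

variable [MeasurableSpace V] [BorelSpace V] (μ : Measure V) [IsProbabilityMeasure μ]
  {r s K : ℝ} {ι : Type*} [Fintype ι]

theorem pow_four_mul_integral_card_hullEdges_sq_le (hι : 4 ≤ Fintype.card ι) (hr : 0 ≤ r)
    (hr1 : r ≤ 1) (hball : ∀ᵐ z ∂μ, ‖z‖ ≤ 1)
    (hcap : ∀ u : V, ‖u‖ = 1 → 1 - r ≤ μ.real (cap u s))
    (hK : ∀ u : V, ‖u‖ = 1 → μ.real (cap u (10 * s)) ≤ K) :
    r ^ 4 * ∫ ω : ι → V, (#(hullEdges o ω) : ℝ) ^ 2 ∂Measure.pi (fun _ ↦ μ) ≤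
      (∫ ω : ι → V, (#(hullEdges o ω) : ℝ) ∂Measure.pi (fun _ ↦ μ)) ^ 2 +
      (4 + (Fintype.card ι * K) ^ 2) * ∫ ω : ι → V, (#(hullEdges o ω) : ℝ) ∂Measure.pi (fun _ ↦ μ) +
      Fintype.card ι ^ 4 * r ^ (Fintype.card ι - 4) := by
  have hsq := integral_card_hullEdges_sq_le o μ (ι := ι)
  have hjoint := pow_four_mul_jointLeftMoment_le o μ hr hr1 hball hcap hK (Fintype.card ι - 4)
  rw [show Fintype.card ι - 4 + 2 = Fintype.card ι - 2 by lia] at hjoint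
  have he := integral_card_hullEdges o μ (ι := ι)
  set n := Fintype.card ι
  set e := ∫ ω : ι → V, (#(hullEdges o ω) : ℝ) ∂Measure.pi (fun _ ↦ μ)
  set L := leftMoment o μ (n - 2)
  have hF : (n.descFactorial 2 : ℝ) ≤ (n : ℝ) ^ 2 := mod_cast Nat.descFactorial_le_pow n 2
  have hF0 : 0 ≤ (n.descFactorial 2 : ℝ) := by positivity
  have he0 : 0 ≤ e := integral_nonneg fun ω ↦ by positivity
  clear_value n e L
  generalize (n.descFactorial 2 : ℝ) = F at *
  calc r ^ 4 * ∫ ω : ι → V, (#(hullEdges o ω) : ℝ) ^ 2 ∂Measure.pi (fun _ ↦ μ)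
      ≤ r ^ 4 * (4 * e + F ^ 2 * jointLeftMoment o μ (n - 4)) := by gcongr
    _ = r ^ 4 * (4 * e) + F ^ 2 * (r ^ 4 * jointLeftMoment o μ (n - 4)) := by ring
    _ ≤ 1 * (4 * e) + F ^ 2 * (L ^ 2 + K ^ 2 * L + r ^ (n - 4)) := by
        gcongr
        exact pow_le_one₀ hr hr1
    _ = e ^ 2 + (4 + F * K ^ 2) * e + F ^ 2 * r ^ (n - 4) := by rw [he]; ring
    _ ≤ e ^ 2 + (4 + n ^ 2 * K ^ 2) * e + (n ^ 2) ^ 2 * r ^ (n - 4) := by gcongr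
    _ = e ^ 2 + (4 + (n * K) ^ 2) * e + n ^ 4 * r ^ (n - 4) := by ring

theorem integral_card_hullEdges_sq_le_mul_sq (hι : 4 ≤ Fintype.card ι) (hr : 0 < r)
    (hr1 : r ≤ 1) (hball : ∀ᵐ z ∂μ, ‖z‖ ≤ 1)
    (hcap : ∀ u : V, ‖u‖ = 1 → 1 - r ≤ μ.real (cap u s))
    (hK : ∀ u : V, ‖u‖ = 1 → μ.real (cap u (10 * s)) ≤ K) {t : ℝ}
    (ht : 1 ≤ t * ∫ ω : ι → V, (#(hullEdges o ω) : ℝ) ∂Measure.pi (fun _ ↦ μ)) :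
    ∫ ω : ι → V, (#(hullEdges o ω) : ℝ) ^ 2 ∂Measure.pi (fun _ ↦ μ) ≤
      (1 + (4 + (Fintype.card ι * K) ^ 2) * t +
        Fintype.card ι ^ 4 * r ^ (Fintype.card ι - 4) * t ^ 2) / r ^ 4 *
      (∫ ω : ι → V, (#(hullEdges o ω) : ℝ) ∂Measure.pi (fun _ ↦ μ)) ^ 2 := by
  have hle := pow_four_mul_integral_card_hullEdges_sq_le o μ hι hr.le hr1 hball hcap hK
  set n := Fintype.card ι
  set e := ∫ ω : ι → V, (#(hullEdges o ω) : ℝ) ∂Measure.pi (fun _ ↦ μ)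
  have he : 0 ≤ e := integral_nonneg fun ω ↦ by positivity
  rw [div_mul_eq_mul_div, le_div_iff₀ (pow_pos hr 4), mul_comm]
  clear_value n e
  calc r ^ 4 * ∫ ω : ι → V, (#(hullEdges o ω) : ℝ) ^ 2 ∂Measure.pi (fun _ ↦ μ)
      ≤ e ^ 2 + (4 + (n * K) ^ 2) * e * 1 + n ^ 4 * r ^ (n - 4) * 1 ^ 2 := by
        rw [one_pow, mul_one, mul_one]
        exact hle
    _ ≤ e ^ 2 + (4 + (n * K) ^ 2) * e * (t * e) + n ^ 4 * r ^ (n - 4) * (t * e) ^ 2 := by gcongr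
    _ = (1 + (4 + (n * K) ^ 2) * t + n ^ 4 * r ^ (n - 4) * t ^ 2) * e ^ 2 := by ring

section GeneralPosition

variable {μ} (hμ : ∀ A : AffineSubspace ℝ V, A ≠ ⊤ → μ A = 0)
include hμ

omit [BorelSpace V] [IsProbabilityMeasure μ] in
theorem measure_areaForm_sub_eq_zero {p d : V} (hd : d ≠ 0) :
    μ {z | o.areaForm d (z - p) = 0} = 0 := by
  refine measure_mono_null (t := AffineSubspace.mk' p (LinearMap.ker (o.areaForm d)))
    (fun z hz ↦ hz) (hμ _ fun htop ↦ hd ?_)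
  have hker : LinearMap.ker (o.areaForm d) = ⊤ := by
    rw [← AffineSubspace.direction_mk' p (LinearMap.ker (o.areaForm d)), htop,
      AffineSubspace.direction_top]
  have hzero : o.areaForm d (o.rightAngleRotation d) = 0 :=
    LinearMap.mem_ker.1 (hker ▸ Submodule.mem_top)
  simpa using! hzero

include o in
theorem ae_apply_zero_ne_apply_one : ∀ᵐ x ∂Measure.pi fun _ : Fin 2 ↦ μ, x 0 ≠ x 1 := by
  have : Nontrivial V := Module.nontrivial_of_finrank_pos (R := ℝ)
    ((Fact.out : Module.finrank ℝ V = 2) ▸ two_pos)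
  obtain ⟨d, hd⟩ := exists_ne (0 : V)
  have hsingle (p : V) : μ {p} = 0 :=
    measure_mono_null (by simp) (measure_areaForm_sub_eq_zero o hμ (p := p) hd)
  have hprod : ∀ᵐ p ∂μ.prod μ, p.1 ≠ p.2 :=
    (Measure.ae_prod_iff_ae_ae (measurableSet_eq_fun measurable_fst measurable_snd).compl).2 <|
      .of_forall fun p ↦ by
        simpa [ae_iff, eq_comm] using hsingle p
  exact (measurePreserving_piFinTwo fun _ ↦ μ).quasiMeasurePreserving.ae hprod

theorem ae_generalPosition : ∀ᵐ ω ∂Measure.pi fun _ : ι ↦ μ, GeneralPosition o ω := by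
  have hA : MeasurableSet {p : (Fin 2 → V) × V | o.areaForm (p.1 1 - p.1 0) (p.2 - p.1 0) ≠ 0} :=
    (isOpen_ne_fun (continuous_areaForm_sub_sub o) continuous_const).measurableSet
  refine ae_all_iff.2 fun g ↦ ?_
  refine ae_forall_notMem_range μ g hA ?_
  filter_upwards [ae_apply_zero_ne_apply_one o hμ] with x hx
  exact measure_eq_zero_iff_ae_notMem.1 (measure_areaForm_sub_eq_zero o hμ (sub_ne_zero.2 hx.symm))

theorem natCast_mul_one_sub_pow_le_integral_card_hullEdges (hι : 3 ≤ Fintype.card ι)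
    (hball : ∀ᵐ z ∂μ, ‖z‖ ≤ 1) (hcap : ∀ u : V, ‖u‖ = 1 → 1 - r ≤ μ.real (cap u s))
    (hs : 0 < s) (M : ℕ) (hM : M * (3 * √s) ≤ 1) :
    M * (1 - r ^ Fintype.card ι) ≤
      ∫ ω : ι → V, (#(hullEdges o ω) : ℝ) ∂Measure.pi (fun _ ↦ μ) := by
  classical
  obtain ⟨u, hu, hsep⟩ := exists_pairwise_separated_unit_vectors o M (by positivity) hM
  have hsep' : Pairwise fun i j ↦ 8 * s < ‖u i - u j‖ ^ 2 := fun i j hij ↦ by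
    refine lt_of_lt_of_le ?_ (hsep hij)
    rw [mul_pow, Real.sq_sqrt hs.le]
    linarith
  let A (i : Fin M) : Set (ι → V) := {ω | ∃ k, ω k ∈ cap (u i) s}
  have hA (i) : MeasurableSet (A i) := by
    simp_rw [A, Set.ofPred_exists]
    exact .iUnion fun k ↦ (isClosed_cap (u i) s).measurableSet.preimage (measurable_pi_apply k)
  have hle : ∀ᵐ ω ∂Measure.pi fun _ : ι ↦ μ, (#{i | ω ∈ A i} : ℝ) ≤ #(hullEdges o ω) := by
    have hpi : ∀ᵐ ω ∂Measure.pi fun _ : ι ↦ μ, ∀ k, ‖ω k‖ ≤ 1 := eventually_all.2 fun k : ι ↦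
      (Measure.tendsto_eval_ae_ae (μ := fun _ ↦ μ) (i := k)).eventually hball
    filter_upwards [hpi, ae_generalPosition o hμ] with ω hω hgp
    rw [← hgp.ncard_extremePoints_eq hι]
    exact Nat.cast_le.2 (card_filter_exists_mem_cap_le hω hu hsep')
  calc M * (1 - r ^ Fintype.card ι) = ∑ i : Fin M, (1 - r ^ Fintype.card ι) := by
        rw [sum_const, card_univ, Fintype.card_fin, nsmul_eq_mul]
    _ ≤ ∑ i, (Measure.pi fun _ ↦ μ).real (A i) := by
        gcongr with i
        rw [measureReal_pi_exists_mem μ (isClosed_cap (u i) s).measurableSet]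
        gcongr
        · exact sub_nonneg.2 measureReal_le_one
        · linarith [hcap (u i) (hu i)]
    _ = ∫ ω : ι → V, (#{i | ω ∈ A i} : ℝ) ∂Measure.pi (fun _ ↦ μ) :=
        (integral_card_filter_mem univ fun i _ ↦ hA i).symm
    _ ≤ ∫ ω : ι → V, (#(hullEdges o ω) : ℝ) ∂Measure.pi (fun _ ↦ μ) :=
        integral_mono_ae (integrable_card_filter_mem univ fun i _ ↦ hA i)
          ((memLp_two_card_hullEdges o μ).integrable one_le_two) hle

end GeneralPosition

end EdgeBounds

end Plane

section Asymptotics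

theorem tendsto_natCast_pow_mul_one_sub_pow (k m : ℕ) {c ε : ℝ} (hc : 0 < c) (hε : 0 < ε)
    {y : ℕ → ℝ} (hy : ∀ᶠ n : ℕ in atTop, c * (n : ℝ) ^ ε ≤ n * y n)
    (hy1 : ∀ᶠ n in atTop, y n ≤ 1) :
    Tendsto (fun n : ℕ ↦ (n : ℝ) ^ k * (1 - y n) ^ (n - m)) atTop (𝓝 0) := by
  have hexp : Tendsto (fun n : ℕ ↦ Real.exp m * (((n : ℝ) ^ ε) ^ (k / ε) *
      Real.exp (-c * (n : ℝ) ^ ε))) atTop (𝓝 (Real.exp m * 0)) :=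
    ((tendsto_rpow_mul_exp_neg_mul_atTop_nhds_zero (k / ε) c hc).comp
      ((tendsto_rpow_atTop hε).comp tendsto_natCast_atTop_atTop)).const_mul _
  rw [mul_zero] at hexp
  refine squeeze_zero' ?_ ?_ hexp
  · filter_upwards [hy1] with n hn
    have := sub_nonneg.2 hn
    positivity
  filter_upwards [hy, hy1, eventually_ge_atTop 1] with n hn hn1 hn0
  have hy0 : 0 ≤ y n := pos_of_mul_pos_right (b := y n) (lt_of_lt_of_le (by positivity) hn)
    (by positivity) |>.le
  have hsub : (n : ℝ) - m ≤ (n - m : ℕ) := by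
    rw [sub_le_iff_le_add]
    exact_mod_cast Nat.sub_le_iff_le_add.1 le_rfl
  have hpow : ((n : ℝ) ^ ε) ^ (k / ε) = (n : ℝ) ^ k := by
    rw [← Real.rpow_mul (by positivity), mul_div_cancel₀ _ hε.ne', Real.rpow_natCast]
  calc (n : ℝ) ^ k * (1 - y n) ^ (n - m)
      ≤ (n : ℝ) ^ k * Real.exp (-y n) ^ (n - m) := by
        gcongr
        exact Real.one_sub_le_exp_neg _
    _ ≤ (n : ℝ) ^ k * Real.exp (m - c * (n : ℝ) ^ ε) := by
        rw [← Real.exp_nat_mul]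
        gcongr
        nlinarith
    _ = Real.exp m * (((n : ℝ) ^ ε) ^ (k / ε) * Real.exp (-c * (n : ℝ) ^ ε)) := by
        rw [hpow, sub_eq_add_neg, Real.exp_add, neg_mul]
        ring

/-- The height at which caps are cut off when there are `n` points and caps of height `s` have mass
of order `s ^ α`. Such a cap contains about `n ^ (1 / (8 * α + 1))` points, enough to make an empty
one very unlikely, while the square of that number is small compared to the number
`n ^ (4 / (8 * α + 1))` of disjoint caps. -/
noncomputable def capHeight (α : ℝ) (n : ℕ) : ℝ := (n : ℝ) ^ (-(8 / (8 * α + 1)))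

variable {α : ℝ}

theorem capHeight_pos {n : ℕ} (hn : 0 < n) : 0 < capHeight α n := by
  unfold capHeight
  positivity

theorem tendsto_capHeight (hα : 0 < α) : Tendsto (capHeight α) atTop (𝓝 0) :=
  (tendsto_rpow_neg_atTop (by positivity)).comp tendsto_natCast_atTop_atTop

theorem natCast_mul_capHeight_rpow (hα : 0 < α) {n : ℕ} (hn : 0 < n) :
    n * capHeight α n ^ α = (n : ℝ) ^ (1 / (8 * α + 1)) := by
  have hn' : (0 : ℝ) < n := Nat.cast_pos.2 hn
  have hexp : 1 + -(8 / (8 * α + 1)) * α = 1 / (8 * α + 1) := by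
    field_simp
    ring
  have hexp0 : 1 + -(8 / (8 * α + 1)) * α ≠ 0 := by
    rw [hexp]
    positivity
  rw [capHeight, ← Real.rpow_mul hn'.le, ← Real.rpow_one_add' hn'.le hexp0, hexp]

theorem tendsto_sq_natCast_mul_capHeight_rpow_mul_sqrt (hα : 0 < α) :
    Tendsto (fun n : ℕ ↦ (n * capHeight α n ^ α) ^ 2 * √(capHeight α n)) atTop (𝓝 0) := by
  have hlim : Tendsto (fun n : ℕ ↦ (n : ℝ) ^ (-(2 / (8 * α + 1)))) atTop (𝓝 0) :=
    (tendsto_rpow_neg_atTop (by positivity)).comp tendsto_natCast_atTop_atTop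
  refine hlim.congr' ?_
  filter_upwards [eventually_gt_atTop 0] with n hn
  have hn' : (0 : ℝ) < n := Nat.cast_pos.2 hn
  rw [natCast_mul_capHeight_rpow hα hn, capHeight, Real.sqrt_eq_rpow, ← Real.rpow_natCast,
    ← Real.rpow_mul hn'.le, ← Real.rpow_mul hn'.le, ← Real.rpow_add hn']
  congr 1
  push_cast
  field_simp
  ring

theorem tendsto_sq_natCast_mul_rpow_const_mul_capHeight_mul_sqrt (hα : 0 < α) (C : ℝ) {t : ℝ}
    (ht : 0 ≤ t) :
    Tendsto (fun n : ℕ ↦ (n * (C * (t * capHeight α n) ^ α)) ^ 2 * √(capHeight α n)) atTop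
      (𝓝 0) := by
  have hlim := (tendsto_sq_natCast_mul_capHeight_rpow_mul_sqrt hα).const_mul ((C * t ^ α) ^ 2)
  rw [mul_zero] at hlim
  refine hlim.congr' ?_
  filter_upwards [eventually_gt_atTop 0] with n hn
  rw [Real.mul_rpow ht (capHeight_pos hn).le]
  ring

theorem tendsto_capHeight_nhdsGT (hα : 0 < α) : Tendsto (capHeight α) atTop (𝓝[>] 0) :=
  tendsto_nhdsWithin_iff.2 ⟨tendsto_capHeight hα,
    (eventually_gt_atTop 0).mono fun _ hn ↦ capHeight_pos hn⟩

theorem tendsto_const_mul_capHeight_rpow (hα : 0 < α) (c : ℝ) :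
    Tendsto (fun n ↦ c * capHeight α n ^ α) atTop (𝓝 0) := by
  have h := ((tendsto_capHeight hα).rpow_const (p := α) (.inr hα.le)).const_mul c
  rwa [Real.zero_rpow hα.ne', mul_zero] at h

theorem tendsto_natCast_pow_mul_one_sub_capHeight_rpow_pow (hα : 0 < α) {c : ℝ} (hc : 0 < c)
    (k m : ℕ) :
    Tendsto (fun n : ℕ ↦ (n : ℝ) ^ k * (1 - c * capHeight α n ^ α) ^ (n - m)) atTop (𝓝 0) := by
  refine tendsto_natCast_pow_mul_one_sub_pow k m hc (ε := 1 / (8 * α + 1)) (by positivity) ?_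
    ((tendsto_const_mul_capHeight_rpow hα c).eventually_le_const one_pos)
  filter_upwards [eventually_gt_atTop 0] with n hn
  rw [← natCast_mul_capHeight_rpow hα hn, mul_left_comm]

end Asymptotics

/-- The measure `μ` lives on the closed unit disk, and caps of small height `s` have mass of order
`s ^ α`, uniformly in the direction of the cap. -/
structure HasCapExponent {V : Type*} [NormedAddCommGroup V] [InnerProductSpace ℝ V]
    [MeasurableSpace V] (μ : Measure V) (α : ℝ) : Prop where
  pos : 0 < α
  ae_norm_le_one : ∀ᵐ z ∂μ, ‖z‖ ≤ 1
  exists_le_measureReal_cap : ∃ c > 0, ∀ᶠ s in 𝓝[>] (0 : ℝ), ∀ u : V, ‖u‖ = 1 →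
    c * s ^ α ≤ μ.real (cap u s)
  exists_measureReal_cap_le : ∃ C, ∀ᶠ s in 𝓝[>] (0 : ℝ), ∀ u : V, ‖u‖ = 1 →
    μ.real (cap u s) ≤ C * s ^ α

section Concentration

variable {V : Type*} [NormedAddCommGroup V] [InnerProductSpace ℝ V]
  [Fact (Module.finrank ℝ V = 2)] (o : Orientation ℝ V (Fin 2))
  [MeasurableSpace V] [BorelSpace V] {μ : Measure V} [IsProbabilityMeasure μ] {α : ℝ}

theorem eventually_one_le_sqrt_capHeight_mul_integral (h : HasCapExponent μ α)
    (hμ : ∀ A : AffineSubspace ℝ V, A ≠ ⊤ → μ A = 0) :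
    ∀ᶠ n : ℕ in atTop, 1 ≤ 6 * √(capHeight α n) *
      ∫ ω : Fin n → V, (#(hullEdges o ω) : ℝ) ∂Measure.pi (fun _ ↦ μ) := by
  obtain ⟨c, hc, hcap⟩ := h.exists_le_measureReal_cap
  have hsqrt : ∀ᶠ n in atTop, √(capHeight α n) ≤ 1 / 12 := by
    have hlim := (tendsto_capHeight h.pos).sqrt
    rw [Real.sqrt_zero] at hlim
    exact hlim.eventually_le_const (by norm_num)
  have hempty := (tendsto_natCast_pow_mul_one_sub_capHeight_rpow_pow h.pos hc 0
    0).eventually_le_const (show (0 : ℝ) < 1 / 4 by norm_num)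
  filter_upwards [hsqrt, hempty, (tendsto_capHeight_nhdsGT h.pos).eventually hcap,
    eventually_ge_atTop 3] with n hn hpow hcapn hn3
  have hs : 0 < capHeight α n := capHeight_pos (by lia)
  have hs' : 0 < √(capHeight α n) := Real.sqrt_pos.2 hs
  rw [pow_zero, one_mul, Nat.sub_zero] at hpow
  let M := ⌊1 / (3 * √(capHeight α n))⌋₊
  have hM : M * (3 * √(capHeight α n)) ≤ 1 :=
    (le_div_iff₀ (by positivity)).1 (Nat.floor_le (by positivity))
  have hM' : 1 < (M + 1) * (3 * √(capHeight α n)) :=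
    (div_lt_iff₀ (by positivity)).1 (Nat.lt_floor_add_one _)
  have hle := natCast_mul_one_sub_pow_le_integral_card_hullEdges o hμ (ι := Fin n)
    (r := 1 - c * capHeight α n ^ α) (by simpa using hn3) h.ae_norm_le_one
    (by simpa using hcapn) hs M hM
  rw [Fintype.card_fin] at hle
  calc (1 : ℝ) ≤ 6 * √(capHeight α n) * (M * (1 - 1 / 4)) := by linarith
    _ ≤ 6 * √(capHeight α n) * (M * (1 - (1 - c * capHeight α n ^ α) ^ n)) := by gcongr
    _ ≤ _ := by gcongr

theorem exists_tendsto_one_integral_sq_le (h : HasCapExponent μ α)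
    (hμ : ∀ A : AffineSubspace ℝ V, A ≠ ⊤ → μ A = 0) :
    ∃ b : ℕ → ℝ, Tendsto b atTop (𝓝 1) ∧ ∀ᶠ n in atTop,
      ∫ ω : Fin n → V, (#(hullEdges o ω) : ℝ) ^ 2 ∂Measure.pi (fun _ ↦ μ) ≤
        b n * (∫ ω : Fin n → V, (#(hullEdges o ω) : ℝ) ∂Measure.pi (fun _ ↦ μ)) ^ 2 := by
  obtain ⟨c, hc, hcap⟩ := h.exists_le_measureReal_cap
  obtain ⟨C, hC⟩ := h.exists_measureReal_cap_le
  let s := capHeight α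
  let r (n : ℕ) := 1 - c * s n ^ α
  let K (n : ℕ) := C * (10 * s n) ^ α
  have hs : Tendsto s atTop (𝓝[>] 0) := tendsto_capHeight_nhdsGT h.pos
  have hs10 : Tendsto (fun n ↦ 10 * s n) atTop (𝓝[>] 0) := by
    refine tendsto_nhdsWithin_iff.2 ⟨by simpa using (tendsto_capHeight h.pos).const_mul 10, ?_⟩
    filter_upwards [eventually_gt_atTop 0] with n hn
    exact mul_pos (by norm_num) (capHeight_pos hn)
  have hr : Tendsto r atTop (𝓝 1) := by
    simpa using (tendsto_const_mul_capHeight_rpow h.pos c).const_sub 1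
  have hsqrt : Tendsto (fun n ↦ √(s n)) atTop (𝓝 0) := by
    simpa using (tendsto_capHeight h.pos).sqrt
  have hK : Tendsto (fun n ↦ (n * K n) ^ 2 * √(s n)) atTop (𝓝 0) :=
    tendsto_sq_natCast_mul_rpow_const_mul_capHeight_mul_sqrt h.pos C (by norm_num)
  have hempty : Tendsto (fun n : ℕ ↦ (n : ℝ) ^ 4 * r n ^ (n - 4)) atTop (𝓝 0) :=
    tendsto_natCast_pow_mul_one_sub_capHeight_rpow_pow h.pos hc 4 4
  refine ⟨fun n ↦ (1 + (4 + (n * K n) ^ 2) * (6 * √(s n)) +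
    n ^ 4 * r n ^ (n - 4) * (6 * √(s n)) ^ 2) / r n ^ 4, ?_, ?_⟩
  · have hlim := ((((hsqrt.const_mul 24).add (hK.const_mul 6)).const_add 1).add
      (hempty.mul ((hsqrt.const_mul 6).pow 2))).div (hr.pow 4) (by norm_num)
    norm_num at hlim
    refine hlim.congr fun n ↦ ?_
    simp only [Pi.div_apply]
    ring
  filter_upwards [eventually_one_le_sqrt_capHeight_mul_integral o h hμ, hs.eventually hcap,
    hs10.eventually hC, hr.eventually_const_lt one_pos, eventually_ge_atTop 4] with
    n hone hcapn hCn hrn hn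
  have hr1 : r n ≤ 1 := by
    have := capHeight_pos (α := α) (show 0 < n by lia)
    exact sub_le_self _ (by positivity)
  simpa only [Fintype.card_fin] using integral_card_hullEdges_sq_le_mul_sq o μ (ι := Fin n)
    (by simpa using hn) hrn hr1 h.ae_norm_le_one (by simpa [r] using hcapn) hCn hone

include o in
theorem tendsto_measure_le_abs_card_hullEdges_div_integral_sub_one (h : HasCapExponent μ α)
    (hμ : ∀ A : AffineSubspace ℝ V, A ≠ ⊤ → μ A = 0) {a : ℝ} (ha : 0 < a) :
    Tendsto (fun n : ℕ ↦ Measure.pi (fun _ : Fin n ↦ μ) {ω | a ≤ |(#(hullEdges o ω) : ℝ) /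
      ∫ ω' : Fin n → V, (#(hullEdges o ω') : ℝ) ∂Measure.pi (fun _ ↦ μ) - 1|}) atTop (𝓝 0) := by
  obtain ⟨b, hb, hle⟩ := exists_tendsto_one_integral_sq_le o h hμ
  refine tendsto_measure_le_abs_div_integral_sub_one
    (.of_forall fun n ↦ memLp_two_card_hullEdges o μ) ?_ hb hle ha
  filter_upwards [eventually_one_le_sqrt_capHeight_mul_integral o h hμ] with n hn
  exact pos_of_mul_pos_right (one_pos.trans_le hn) (by positivity)

theorem tendsto_measure_le_abs_ncard_extremePoints_div_integral_sub_one (h : HasCapExponent μ α)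
    (hμ : ∀ A : AffineSubspace ℝ V, A ≠ ⊤ → μ A = 0) {a : ℝ} (ha : 0 < a) :
    Tendsto (fun n : ℕ ↦ Measure.pi (fun _ : Fin n ↦ μ) {ω |
      a ≤ |((convexHull ℝ (Set.range ω)).extremePoints ℝ).ncard /
        ∫ ω' : Fin n → V, (((convexHull ℝ (Set.range ω')).extremePoints ℝ).ncard : ℝ)
          ∂Measure.pi (fun _ ↦ μ) - 1|}) atTop (𝓝 0) := by
  let o : Orientation ℝ V (Fin 2) :=
    (Module.finBasisOfFinrankEq ℝ V (Fact.out : Module.finrank ℝ V = 2)).orientation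
  refine (tendsto_measure_le_abs_card_hullEdges_div_integral_sub_one o h hμ ha).congr' ?_
  filter_upwards [eventually_ge_atTop 3] with n hn
  have hcard : ∀ᵐ ω ∂Measure.pi fun _ : Fin n ↦ μ,
      ((convexHull ℝ (Set.range ω)).extremePoints ℝ).ncard = (#(hullEdges o ω) : ℝ) := by
    filter_upwards [ae_generalPosition o hμ] with ω hω
    rw [hω.ncard_extremePoints_eq (by simpa using hn)]
  rw [integral_congr_ae hcard]
  refine measure_congr (eventuallyEq_set.2 ?_)
  filter_upwards [hcard] with ω hω
  rw [hω]

end Concentration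

section BetaMeasure

/-- The density of the beta distribution `betaMeasure β` with respect to the area. -/
noncomputable def betaDensity (β : ℝ) (x : EuclideanSpace ℝ (Fin 2)) : ℝ :=
  if ‖x‖ ≤ 1 then (β + 1) / Real.pi * (1 - ‖x‖ ^ 2) ^ β else 0

theorem betaMeasure_eq_withDensity (β : ℝ) :
    betaMeasure β = volume.withDensity fun x ↦ ENNReal.ofReal (betaDensity β x) := rfl

theorem measurable_betaDensity (β : ℝ) : Measurable (betaDensity β) :=
  Measurable.ite (measurableSet_le measurable_norm measurable_const) (by fun_prop)
    measurable_const

theorem ae_norm_le_one_betaMeasure (β : ℝ) : ∀ᵐ z ∂betaMeasure β, ‖z‖ ≤ 1 := by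
  rw [betaMeasure_eq_withDensity, ae_withDensity_iff (measurable_betaDensity β).ennreal_ofReal]
  refine .of_forall fun z hz ↦ ?_
  contrapose! hz
  simp [betaDensity, hz.not_ge]

theorem betaMeasure_affineSubspace (β : ℝ) {A : AffineSubspace ℝ (EuclideanSpace ℝ (Fin 2))}
    (hA : A ≠ ⊤) : betaMeasure β A = 0 :=
  withDensity_absolutelyContinuous _ _ (Measure.addHaar_affineSubspace volume A hA)

theorem measurePreserving_linearIsometryEquiv_betaMeasure (β : ℝ)
    (f : EuclideanSpace ℝ (Fin 2) ≃ₗᵢ[ℝ] EuclideanSpace ℝ (Fin 2)) :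
    MeasurePreserving f (betaMeasure β) (betaMeasure β) := by
  refine ⟨f.continuous.measurable, Measure.ext fun A hA ↦ ?_⟩
  rw [Measure.map_apply f.continuous.measurable hA, betaMeasure_eq_withDensity,
    withDensity_apply _ hA, withDensity_apply _ (f.continuous.measurable hA),
    ← f.measurePreserving.setLIntegral_comp_preimage hA (measurable_betaDensity β).ennreal_ofReal]
  simp only [betaDensity, f.norm_map]

theorem measureReal_cap_eq_of_measurePreserving {V : Type*} [NormedAddCommGroup V]
    [InnerProductSpace ℝ V] [MeasurableSpace V] [BorelSpace V] {μ : Measure V}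
    (hμ : ∀ f : V ≃ₗᵢ[ℝ] V, MeasurePreserving f μ μ) {u v : V} (huv : ‖u‖ = ‖v‖) (s : ℝ) :
    μ.real (cap u s) = μ.real (cap v s) := by
  let f := Submodule.reflection (ℝ ∙ (u - v))ᗮ
  have hf : f u = v := Submodule.reflection_sub huv
  have hpre : f ⁻¹' cap v s = cap u s := by
    ext z
    rw [Set.mem_preimage, cap, cap, Set.mem_ofPred_eq, Set.mem_ofPred_eq, ← hf, f.inner_map_map]
  rw [← hpre, (hμ f).measureReal_preimage (isClosed_cap v s).measurableSet.nullMeasurableSet]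

variable {β : ℝ} (hβ : 0 ≤ β)
include hβ

theorem integral_mul_one_sub_sq_rpow :
    ∫ y in (0 : ℝ)..1, y * (1 - y ^ 2) ^ β = 1 / (2 * (β + 1)) := by
  have hβ1 : β + 1 ≠ 0 := by positivity
  have hderiv (y : ℝ) : HasDerivAt (fun y : ℝ ↦ -(1 / (2 * (β + 1))) * (1 - y ^ 2) ^ (β + 1))
      (y * (1 - y ^ 2) ^ β) y := by
    have hsq : HasDerivAt (fun y : ℝ ↦ 1 - y ^ 2) (-(2 * y)) y := by
      simpa using (hasDerivAt_pow 2 y).const_sub 1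
    refine ((hsq.rpow_const (p := β + 1) (.inr (by linarith))).const_mul _).congr_deriv ?_
    rw [add_sub_cancel_right]
    field_simp
  have hcont : Continuous fun y : ℝ ↦ y * (1 - y ^ 2) ^ β :=
    continuous_id.mul ((by fun_prop : Continuous fun y : ℝ ↦ 1 - y ^ 2).rpow_const
      fun _ ↦ .inr hβ)
  rw [intervalIntegral.integral_eq_sub_of_hasDerivAt (fun y _ ↦ hderiv y)
    (hcont.intervalIntegrable _ _)]
  simp [Real.zero_rpow hβ1]

theorem integral_betaDensity : ∫ x, betaDensity β x = 1 := by
  have hβ1 : β + 1 ≠ 0 := by positivity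
  let f (y : ℝ) : ℝ := if y ≤ 1 then (β + 1) / Real.pi * (1 - y ^ 2) ^ β else 0
  have hradial : ∫ y in Set.Ioi (0 : ℝ), y ^ (2 - 1) • f y =
      (β + 1) / Real.pi * (1 / (2 * (β + 1))) := by
    rw [← integral_mul_one_sub_sq_rpow hβ, ← intervalIntegral.integral_const_mul,
      intervalIntegral.integral_of_le zero_le_one]
    rw [setIntegral_eq_of_subset_of_forall_sdiff_eq_zero measurableSet_Ioi
      (Set.Ioc_subset_Ioi_self : Set.Ioc (0 : ℝ) 1 ⊆ _) fun y hy ↦ ?_]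
    · refine setIntegral_congr_fun measurableSet_Ioc fun y hy ↦ ?_
      simp only [f, if_pos hy.2, smul_eq_mul]
      ring
    · simp [f, show ¬ y ≤ 1 from fun hy1 ↦ hy.2 ⟨hy.1, hy1⟩]
  have hball : volume.real (Metric.ball (0 : EuclideanSpace ℝ (Fin 2)) 1) = Real.pi := by
    simp [Measure.real, EuclideanSpace.volume_ball_fin_two, Real.pi_pos.le]
  have h := integral_fun_norm_addHaar (volume : Measure (EuclideanSpace ℝ (Fin 2))) f
  rw [finrank_euclideanSpace_fin, hball, hradial] at h
  refine h.trans ?_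
  rw [nsmul_eq_mul, smul_eq_mul]
  push_cast
  field_simp

theorem betaDensity_nonneg (x : EuclideanSpace ℝ (Fin 2)) : 0 ≤ betaDensity β x := by
  unfold betaDensity
  split_ifs with hx
  · have : 0 ≤ 1 - ‖x‖ ^ 2 := sub_nonneg.2 (pow_le_one₀ (norm_nonneg x) hx)
    positivity
  · exact le_rfl

theorem isProbabilityMeasure_betaMeasure : IsProbabilityMeasure (betaMeasure β) := by
  have hint : Integrable (betaDensity β) :=
    .of_integral_ne_zero (by rw [integral_betaDensity hβ]; exact one_ne_zero)
  constructor
  rw [betaMeasure_eq_withDensity, withDensity_apply _ .univ, Measure.restrict_univ,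
    ← ofReal_integral_eq_lintegral_ofReal hint (.of_forall (betaDensity_nonneg hβ)),
    integral_betaDensity hβ, ENNReal.ofReal_one]

theorem betaMeasure_le_mul_volume {A : Set (EuclideanSpace ℝ (Fin 2))} (hA : MeasurableSet A)
    {t : ℝ} (ht : 0 ≤ t) (hAt : ∀ z ∈ A, 1 - ‖z‖ ^ 2 ≤ t) :
    betaMeasure β A ≤ ENNReal.ofReal ((β + 1) / Real.pi * t ^ β) * volume A := by
  rw [betaMeasure_eq_withDensity, withDensity_apply _ hA, ← setLIntegral_const]
  refine setLIntegral_mono' hA fun z hz ↦ ENNReal.ofReal_le_ofReal ?_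
  unfold betaDensity
  split_ifs with hz1
  · have : 0 ≤ 1 - ‖z‖ ^ 2 := sub_nonneg.2 (pow_le_one₀ (norm_nonneg z) hz1)
    gcongr
    exact hAt z hz
  · positivity

theorem mul_volume_le_betaMeasure {A : Set (EuclideanSpace ℝ (Fin 2))} (hA : MeasurableSet A)
    {t : ℝ} (ht : 0 ≤ t) (hAt : ∀ z ∈ A, t ≤ 1 - ‖z‖ ^ 2) :
    ENNReal.ofReal ((β + 1) / Real.pi * t ^ β) * volume A ≤ betaMeasure β A := by
  rw [betaMeasure_eq_withDensity, withDensity_apply _ hA, ← setLIntegral_const]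
  refine setLIntegral_mono' hA fun z hz ↦ ENNReal.ofReal_le_ofReal ?_
  have hz1 : ‖z‖ ≤ 1 := (sq_le_one_iff₀ (norm_nonneg z)).1 (by linarith [hAt z hz])
  rw [betaDensity, if_pos hz1]
  gcongr
  exact hAt z hz

omit hβ in
theorem measurableSet_setOf_mem_and_mem {I J : Set ℝ} (hI : MeasurableSet I)
    (hJ : MeasurableSet J) :
    MeasurableSet {z : EuclideanSpace ℝ (Fin 2) | z 0 ∈ I ∧ z 1 ∈ J} :=
  ((by fun_prop : Measurable fun z : EuclideanSpace ℝ (Fin 2) ↦ z 0) hI).inter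
    ((by fun_prop : Measurable fun z : EuclideanSpace ℝ (Fin 2) ↦ z 1) hJ)

omit hβ in
theorem volume_setOf_mem_and_mem (I J : Set ℝ) :
    volume {z : EuclideanSpace ℝ (Fin 2) | z 0 ∈ I ∧ z 1 ∈ J} = volume I * volume J := by
  have hpre : {z : EuclideanSpace ℝ (Fin 2) | z 0 ∈ I ∧ z 1 ∈ J} =
      (MeasurableEquiv.toLp 2 (Fin 2 → ℝ)).symm ⁻¹' Set.pi Set.univ ![I, J] := by
    ext z
    simp [Fin.forall_fin_two]
  have hpres := EuclideanSpace.volume_preserving_symm_measurableEquiv_toLp (Fin 2)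
  rw [hpre, hpres.measure_preimage_equiv, volume_pi_pi, Fin.prod_univ_two]
  rfl

omit hβ in
theorem norm_sq_eq_add_sq (z : EuclideanSpace ℝ (Fin 2)) : ‖z‖ ^ 2 = z 0 ^ 2 + z 1 ^ 2 := by
  rw [EuclideanSpace.real_norm_sq_eq, Fin.sum_univ_two]

omit hβ in
theorem rpow_add_three_halves {s : ℝ} (hs : 0 < s) (β : ℝ) :
    s ^ (β + 3 / 2) = s ^ β * (s * √s) := by
  rw [show β + 3 / 2 = β + (1 + 1 / 2) by ring, Real.rpow_add hs, Real.rpow_add hs, Real.rpow_one,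
    Real.sqrt_eq_rpow]

theorem measureReal_betaMeasure_cap_le {u : EuclideanSpace ℝ (Fin 2)} (hu : ‖u‖ = 1) {s : ℝ}
    (hs : 0 < s) :
    (betaMeasure β).real (cap u s) ≤ (β + 1) / Real.pi * 2 ^ β * (2 * √2) * s ^ (β + 3 / 2) := by
  rw [measureReal_cap_eq_of_measurePreserving
    (measurePreserving_linearIsometryEquiv_betaMeasure β)
    (v := EuclideanSpace.single 0 (1 : ℝ)) (by simp [hu])]
  let R := {z : EuclideanSpace ℝ (Fin 2) |
    z 0 ∈ Set.Icc (1 - s) 1 ∧ z 1 ∈ Set.Icc (-√(2 * s)) √(2 * s)}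
  have hsub : ∀ᵐ z ∂betaMeasure β, z ∈ cap (EuclideanSpace.single 0 (1 : ℝ)) s → z ∈ R := by
    filter_upwards [ae_norm_le_one_betaMeasure β] with z hz1 hz
    have hz0 : 1 - s ≤ z 0 := by simpa [cap, EuclideanSpace.inner_single_left] using hz
    have hsum : z 0 ^ 2 + z 1 ^ 2 ≤ 1 := norm_sq_eq_add_sq z ▸ pow_le_one₀ (norm_nonneg z) hz1
    have hz0' : z 0 ≤ 1 := by nlinarith [sq_nonneg (z 1)]
    exact ⟨⟨hz0, hz0'⟩, abs_le.1 (Real.abs_le_sqrt (by nlinarith))⟩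
  have hR : ∀ z ∈ R, 1 - ‖z‖ ^ 2 ≤ 2 * s := fun z hz ↦ by
    rw [norm_sq_eq_add_sq]
    nlinarith [sq_nonneg (z 1), hz.1.1, hz.1.2]
  refine ENNReal.toReal_le_of_le_ofReal (by positivity) ?_
  calc betaMeasure β (cap (EuclideanSpace.single 0 (1 : ℝ)) s) ≤ betaMeasure β R :=
        measure_mono_ae hsub
    _ ≤ ENNReal.ofReal ((β + 1) / Real.pi * (2 * s) ^ β) * volume R :=
        betaMeasure_le_mul_volume hβ (measurableSet_setOf_mem_and_mem measurableSet_Icc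
          measurableSet_Icc) (by positivity) hR
    _ = ENNReal.ofReal ((β + 1) / Real.pi * 2 ^ β * (2 * √2) * s ^ (β + 3 / 2)) := by
        rw [volume_setOf_mem_and_mem, Real.volume_Icc, Real.volume_Icc,
          ← ENNReal.ofReal_mul (by linarith), ← ENNReal.ofReal_mul (by positivity),
          rpow_add_three_halves hs, Real.mul_rpow two_pos.le hs.le, Real.sqrt_mul two_pos.le]
        ring_nf

theorem le_measureReal_betaMeasure_cap {u : EuclideanSpace ℝ (Fin 2)} (hu : ‖u‖ = 1) {s : ℝ}
    (hs : 0 < s) (hs1 : s ≤ 1) :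
    (β + 1) / Real.pi * (1 / 2) ^ β * (1 / 2) * s ^ (β + 3 / 2) ≤
      (betaMeasure β).real (cap u s) := by
  rw [measureReal_cap_eq_of_measurePreserving
    (measurePreserving_linearIsometryEquiv_betaMeasure β)
    (v := EuclideanSpace.single 0 (1 : ℝ)) (by simp [hu])]
  have := isProbabilityMeasure_betaMeasure hβ
  let R := {z : EuclideanSpace ℝ (Fin 2) |
    z 0 ∈ Set.Icc (1 - s) (1 - s / 2) ∧ z 1 ∈ Set.Icc (-(√s / 2)) (√s / 2)}
  have hsub : R ⊆ cap (EuclideanSpace.single 0 (1 : ℝ)) s := fun z hz ↦ by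
    simpa [cap, EuclideanSpace.inner_single_left] using hz.1.1
  have hR : ∀ z ∈ R, 1 / 2 * s ≤ 1 - ‖z‖ ^ 2 := by
    rintro z ⟨⟨hl, hr⟩, hb, ht⟩
    rw [norm_sq_eq_add_sq]
    nlinarith [Real.sq_sqrt hs.le]
  refine (ENNReal.ofReal_le_iff_le_toReal (measure_ne_top _ _)).1 ?_
  calc ENNReal.ofReal ((β + 1) / Real.pi * (1 / 2) ^ β * (1 / 2) * s ^ (β + 3 / 2))
      = ENNReal.ofReal ((β + 1) / Real.pi * (1 / 2 * s) ^ β) * volume R := by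
        rw [volume_setOf_mem_and_mem, Real.volume_Icc, Real.volume_Icc,
          ← ENNReal.ofReal_mul (by linarith), ← ENNReal.ofReal_mul (by positivity),
          rpow_add_three_halves hs, Real.mul_rpow one_half_pos.le hs.le]
        ring_nf
    _ ≤ betaMeasure β R :=
        mul_volume_le_betaMeasure hβ (measurableSet_setOf_mem_and_mem measurableSet_Icc
          measurableSet_Icc) (by positivity) hR
    _ ≤ betaMeasure β (cap (EuclideanSpace.single 0 (1 : ℝ)) s) := measure_mono hsub

theorem hasCapExponent_betaMeasure : HasCapExponent (betaMeasure β) (β + 3 / 2) where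
  pos := by positivity
  ae_norm_le_one := ae_norm_le_one_betaMeasure β
  exists_le_measureReal_cap := ⟨(β + 1) / Real.pi * (1 / 2) ^ β * (1 / 2), by positivity,
    mem_of_superset (Ioc_mem_nhdsGT one_pos) fun _ hs _ hu ↦
      le_measureReal_betaMeasure_cap hβ hu hs.1 hs.2⟩
  exists_measureReal_cap_le := ⟨(β + 1) / Real.pi * 2 ^ β * (2 * √2),
    mem_of_superset self_mem_nhdsWithin fun _ hs _ hu ↦ measureReal_betaMeasure_cap_le hβ hu hs⟩

end BetaMeasure

end RandomPolygon

theorem vertex_count_concentration_general {β : ℝ} (hβ : 0 ≤ β) {a : ℝ} (ha : 0 < a) :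
    Filter.Tendsto (fun n : ℕ ↦ betaPi β n {ω | a ≤ |vertCount ω / meanF0 β n - 1|})
      Filter.atTop (nhds 0) := by
  have := RandomPolygon.isProbabilityMeasure_betaMeasure hβ
  have : Fact (Module.finrank ℝ (EuclideanSpace ℝ (Fin 2)) = 2) := ⟨finrank_euclideanSpace_fin⟩
  exact RandomPolygon.tendsto_measure_le_abs_ncard_extremePoints_div_integral_sub_one
    (RandomPolygon.hasCapExponent_betaMeasure hβ)
    (fun _ ↦ RandomPolygon.betaMeasure_affineSubspace β) ha

/-- concentration of the vertex count. For `d ≥ 5`, `β = d/2 - 2` and any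
`a > 0`, the probability `μ_β^{⊗n}(|f₀(Qₙ)/E[f₀(Qₙ)] - 1| ≥ a)` tends to `0`, i.e.
`f₀(Qₙ)/E[f₀(Qₙ)]` converges in probability to `1`. -/
theorem vertex_count_concentration (d : ℕ) (hd : 5 ≤ d)
    (β : ℝ) (hβ : β = (d : ℝ) / 2 - 2) (a : ℝ) (ha : 0 < a) :
    Filter.Tendsto
      (fun n : ℕ => betaPi β n {ω | a ≤ |vertCount ω / meanF0 β n - 1|})
      Filter.atTop (nhds 0) := by
  have hd' : (5 : ℝ) ≤ d := mod_cast hd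
  exact vertex_count_concentration_general (by linarith) ha
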